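/- arXiv:0810.2673 — 3 statements merged into one kernel-verified Lean document; each statement's English description precedes it below -/
import Mathlib

section
/- Let A and B be unital complex Banach algebras, I ⊆ A and J ⊆ B proper closed two-sided ideals with B/J semisimple, and T : A → B a linear map. Then the following are equivalent: (a) T is essentially spectrally bounded (there exists M ≥ 0 with r(Tx + J) ≤ M·r(x + I) for all x ∈ A) and surjective modulo J (for every y ∈ B there is x ∈ A with y − Tx ∈ J); (b) T maps I into J, and the induced linear map T̂ : A/I → B/J, x + I ↦ Tx + J, is spectrally bounded and surjective. -/
open scoped ENNReal NNReal

/-- The quotient of a complex algebra by a two-sided ideal is a complex algebra. -/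
noncomputable instance TwoSidedIdeal.quotientAlgebra {A : Type*} [Ring A] [Algebra ℂ A]
    (I : TwoSidedIdeal A) : Algebra ℂ I.ringCon.Quotient :=
  (I.ringCon.mk'.comp (algebraMap ℂ A)).toAlgebra' (by
    intro c x
    induction x using Quotient.ind
    rename_i a
    show I.ringCon.mk' (algebraMap ℂ A c) * I.ringCon.mk' a =
      I.ringCon.mk' a * I.ringCon.mk' (algebraMap ℂ A c)
    rw [← map_mul, ← map_mul, Algebra.commutes])

section aux
set_option linter.unusedSectionVars false
variable {C : Type*} [NormedRing C] [NormedAlgebra ℂ C] [CompleteSpace C] [NormOneClass C]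

theorem aux_pow_lt (x : C) (ρ : ℝ≥0) (h : spectralRadius ℂ x < ρ) :
    ∃ j : ℕ, ‖x ^ (2 ^ j)‖ < (ρ : ℝ) ^ (2 ^ j) := by
  have ht := spectrum.pow_nnnorm_pow_one_div_tendsto_nhds_spectralRadius x
  have h2 : Filter.Tendsto (fun j : ℕ => 2 ^ j) Filter.atTop Filter.atTop :=
    tendsto_pow_atTop_atTop_of_one_lt (by norm_num : 1 < 2)
  obtain ⟨j, hj⟩ := ((ht.comp h2).eventually_lt_const h).exists
  refine ⟨j, ?_⟩
  simp only [Function.comp] at hj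
  have hp : (0 : ℝ) < ((2 ^ j : ℕ) : ℝ) := by positivity
  rw [one_div, ENNReal.rpow_inv_lt_iff hp, ENNReal.rpow_natCast] at hj
  exact_mod_cast hj

theorem aux_mono (x : C) (ρ : ℝ≥0) {i j : ℕ} (hij : i ≤ j)
    (h : ‖x ^ (2 ^ i)‖ < (ρ : ℝ) ^ (2 ^ i)) : ‖x ^ (2 ^ j)‖ < (ρ : ℝ) ^ (2 ^ j) := by
  induction j, hij using Nat.le_induction with
  | base => exact h
  | succ n _ ih =>
    rw [pow_succ, pow_mul, pow_mul]
    exact (norm_pow_le' _ (by norm_num)).trans_lt (pow_lt_pow_left₀ ih (norm_nonneg _) (by norm_num))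

theorem aux_compact (b y : C) (S : Set ℂ) (hS : IsCompact S) (ρ : ℝ≥0)
    (h : ∀ l ∈ S, spectralRadius ℂ (b + l • y) < ρ) :
    ∃ i : ℕ, ∀ j ≥ i, ∀ l ∈ S, ‖(b + l • y) ^ (2 ^ j)‖ < (ρ : ℝ) ^ (2 ^ j) := by
  obtain ⟨i, hi⟩ := hS.elim_directed_cover
    (fun j : ℕ => {l : ℂ | ‖(b + l • y) ^ (2 ^ j)‖ < (ρ : ℝ) ^ (2 ^ j)})
    (fun j => isOpen_lt (by fun_prop) (by fun_prop))
    (fun l hl => by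
      obtain ⟨j, hj⟩ := aux_pow_lt _ ρ (h l hl)
      exact Set.mem_iUnion.2 ⟨j, hj⟩)
    (directed_of_isDirected_le (fun i j hij l hl => aux_mono _ ρ hij hl))
  exact ⟨i, fun j hj l hl => aux_mono _ ρ hj (hi hl)⟩

theorem aux_max (b y : C) (n : ℕ) (ε : ℝ) (h0 : 0 < ε) (h1 : ε < 1) (p q : ℝ)
    (hp : ∀ l : ℂ, ‖l‖ = ε → ‖(b + l • y) ^ n‖ ≤ p)
    (hq : ∀ l : ℂ, ‖l‖ = ε⁻¹ → ‖(b + l • y) ^ n‖ ≤ q) :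
    ‖(b + y) ^ (n * 2)‖ ≤ p * q := by
  set U : Set ℂ := {z | ε < ‖z‖ ∧ ‖z‖ < ε⁻¹} with hU
  have hUo : IsOpen U := (isOpen_lt continuous_const continuous_norm).inter
    (isOpen_lt continuous_norm continuous_const)
  have hcl : closure U ⊆ {z | ε ≤ ‖z‖ ∧ ‖z‖ ≤ ε⁻¹} := by
    apply closure_minimal
    · exact fun z hz => ⟨hz.1.le, hz.2.le⟩
    · exact (isClosed_le continuous_const continuous_norm).inter
        (isClosed_le continuous_norm continuous_const)
  have hb : Bornology.IsBounded U := by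
    apply (Metric.isBounded_ball (x := (0 : ℂ)) (r := ε⁻¹)).subset
    intro z hz
    simpa using hz.2
  have hd : DiffContOnCl ℂ (fun z : ℂ => (b + z • y) ^ n * (b + z⁻¹ • y) ^ n) U := by
    apply DifferentiableOn.diffContOnCl
    intro z hz
    have hz0 : z ≠ 0 := by
      rintro rfl
      have := (hcl hz).1
      simp at this
      linarith
    apply DifferentiableAt.differentiableWithinAt
    have hi : DifferentiableAt ℂ (fun z : ℂ => z⁻¹) z := differentiableAt_inv hz0
    fun_prop (disch := assumption)
  have hm1 : (1 : ℂ) ∈ closure U := subset_closure ⟨by simpa using h1, by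
    simpa using (one_lt_inv₀ h0).2 h1⟩
  have := Complex.norm_le_of_forall_mem_frontier_norm_le hb hd (C := p * q) ?_ hm1
  · simpa [← pow_add, mul_two] using this
  · intro z hz
    rw [hUo.frontier_eq] at hz
    have hz1 := hcl hz.1
    have hcase : ‖z‖ = ε ∨ ‖z‖ = ε⁻¹ := by
      by_contra hcon
      push Not at hcon
      exact hz.2 ⟨lt_of_le_of_ne hz1.1 (Ne.symm hcon.1), lt_of_le_of_ne hz1.2 hcon.2⟩
    refine (norm_mul_le _ _).trans ?_
    rcases hcase with h | h
    · have a1 := hp z h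
      have a2 := hq z⁻¹ (by simp [h])
      exact mul_le_mul a1 a2 (norm_nonneg _) ((norm_nonneg _).trans a1)
    · have a1 := hq z h
      have a2 := hp z⁻¹ (by simp [h])
      rw [mul_comm p q]
      exact mul_le_mul a1 a2 (norm_nonneg _) ((norm_nonneg _).trans a1)

theorem aux_liouville (b y : C) (K : ℝ≥0) (hb : spectralRadius ℂ b = 0)
    (hK : ∀ l : ℂ, spectralRadius ℂ (b + l • y) ≤ K) : spectralRadius ℂ (b + y) = 0 := by
  have key : ∀ δ : ℝ≥0, 0 < δ → spectralRadius ℂ (b + y) ^ 2 ≤ ((δ * (K + 1) : ℝ≥0) : ℝ≥0∞) := by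
    intro δ hδ
    obtain ⟨i, hi⟩ := aux_pow_lt b δ (by rw [hb]; exact_mod_cast hδ)
    have ho : IsOpen {l : ℂ | ‖(b + l • y) ^ (2 ^ i)‖ < (δ : ℝ) ^ (2 ^ i)} :=
      isOpen_lt (by fun_prop) (by fun_prop)
    obtain ⟨e, he, hball⟩ := Metric.isOpen_iff.1 ho 0 (by simpa using hi)
    set ε := min (e / 2) (1 / 2) with hε
    have h0 : 0 < ε := by positivity
    have h1 : ε < 1 := lt_of_le_of_lt (min_le_right _ _) (by norm_num)
    have h2 : ε < e := lt_of_le_of_lt (min_le_left _ _) (by linarith)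
    obtain ⟨k, hk⟩ := aux_compact b y (Metric.sphere 0 ε⁻¹) (isCompact_sphere _ _) (K + 1)
      (fun l _ => (hK l).trans_lt (by exact_mod_cast lt_add_one K))
    set j := max i k
    have hm := aux_max b y (2 ^ j) ε h0 h1 _ _
      (fun l hl => (aux_mono _ δ (le_max_left i k) (hball (by simpa [hl] using h2))).le)
      (fun l hl => (hk j (le_max_right i k) l (by simpa using hl)).le)
    have h3 := (spectrum.spectralRadius_pow_le (𝕜 := ℂ) (b + y) (2 ^ j * 2) (by positivity)).trans
      (spectrum.spectralRadius_le_nnnorm _)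
    have h4 : ‖(b + y) ^ (2 ^ j * 2)‖₊ ≤ (δ * (K + 1)) ^ (2 ^ j) := by
      rw [mul_pow]; exact_mod_cast hm
    have h5 : (spectralRadius ℂ (b + y) ^ 2) ^ (2 ^ j) ≤
        ((δ * (K + 1) : ℝ≥0) : ℝ≥0∞) ^ (2 ^ j) := by
      rw [← pow_mul, mul_comm 2]
      refine h3.trans ?_
      exact_mod_cast h4
    exact (ENNReal.pow_le_pow_left_iff (by positivity)).1 h5
  by_contra hne
  have hpos : 0 < spectralRadius ℂ (b + y) ^ 2 := by positivity
  have hfin : spectralRadius ℂ (b + y) ^ 2 ≠ ∞ := by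
    apply ne_top_of_le_ne_top _ (key 1 one_pos)
    exact ENNReal.coe_ne_top
  lift spectralRadius ℂ (b + y) ^ 2 to ℝ≥0 using hfin with s hs
  have hs0 : 0 < s := by exact_mod_cast hpos
  have := key (s / (2 * (K + 1))) (by positivity)
  norm_cast at this
  have e : s / (2 * (K + 1)) * (K + 1) = s / 2 := by field_simp
  rw [e] at this
  exact absurd this (not_le.2 (half_lt_self hs0))

theorem aux_jacobson (y : C) (h : ∀ b : C, ∃ K : ℝ≥0, ∀ l : ℂ, spectralRadius ℂ (b + l • y) ≤ K)
    (m : Ideal C) (hm : m.IsMaximal) : y ∈ m := by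
  have hnu : ∀ z ∈ m, ¬ IsUnit z := fun z hz hu => hm.ne_top (Ideal.eq_top_of_isUnit_mem _ hz hu)
  have hy : spectralRadius ℂ y = 0 := by
    obtain ⟨K, hK⟩ := h 0
    have := aux_liouville 0 y K (by simp) hK
    simpa using this
  by_contra hym
  have hinv : ∀ v ∉ m, ∃ z, z * v - 1 ∈ m := by
    intro v hv
    have : m ⊔ Ideal.span {v} = ⊤ := by
      apply hm.1.2
      refine lt_of_le_of_ne le_sup_left fun he => hv ?_
      rw [he]
      exact Ideal.mem_sup_right (Ideal.subset_span rfl)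
    obtain ⟨a, ha, c, hc, hac⟩ := Submodule.mem_sup.1 ((Ideal.eq_top_iff_one _).1 this)
    obtain ⟨z, rfl⟩ := Ideal.mem_span_singleton'.1 hc
    refine ⟨z, ?_⟩
    rw [← hac]
    simpa using ha
  have hex : ∃ v ∈ m, v * y ∉ m := by
    by_contra hcon
    push Not at hcon
    obtain ⟨z, hz⟩ := hinv y hym
    have hmn : ∀ n : ℕ, ∀ v ∈ m, v * y ^ n ∈ m := by
      intro n
      induction n with
      | zero => simp
      | succ n ih =>
        intro v hv
        rw [pow_succ, ← mul_assoc]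
        exact hcon _ (ih v hv)
    have hn : ∀ n : ℕ, z ^ n * y ^ n - 1 ∈ m := by
      intro n
      induction n with
      | zero => simp
      | succ n ih =>
        have e : z ^ (n + 1) * y ^ (n + 1) - 1 =
            z ^ n * ((z * y - 1) * y ^ n) + (z ^ n * y ^ n - 1) := by
          rw [pow_succ z, pow_succ' y]; noncomm_ring
        rw [e]
        exact m.add_mem (m.mul_mem_left _ (hmn n _ hz)) ih
    have hge : ∀ n : ℕ, 1 ≤ ‖z ^ n * y ^ n‖ := by
      intro n
      by_contra hlt
      push Not at hlt
      have := isUnit_one_sub_of_norm_lt_one hlt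
      refine hnu _ ?_ this
      rw [← neg_sub]
      exact m.neg_mem (hn n)
    set ρ : ℝ≥0 := (‖z‖₊ + 1)⁻¹ with hρ
    obtain ⟨j, hj⟩ := aux_pow_lt y ρ (by rw [hy]; exact_mod_cast (by positivity : 0 < ρ))
    have h1 := hge (2 ^ j)
    have h2 : ‖z ^ (2 ^ j) * y ^ (2 ^ j)‖ ≤ ‖z‖ ^ (2 ^ j) * ‖y ^ (2 ^ j)‖ :=
      (norm_mul_le _ _).trans (by gcongr; exact norm_pow_le _ _)
    have h3 : ‖z‖ ^ (2 ^ j) * ‖y ^ (2 ^ j)‖ ≤ (‖z‖ + 1) ^ (2 ^ j) * ‖y ^ (2 ^ j)‖ := by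
      gcongr; linarith
    have h4 : (‖z‖ + 1) ^ (2 ^ j) * ‖y ^ (2 ^ j)‖ < (‖z‖ + 1) ^ (2 ^ j) * (ρ : ℝ) ^ (2 ^ j) := by
      gcongr
    have h5 : (‖z‖ + 1) ^ (2 ^ j) * (ρ : ℝ) ^ (2 ^ j) = 1 := by
      rw [← mul_pow, hρ]
      have : ‖z‖ + 1 ≠ 0 := by positivity
      push_cast
      rw [mul_inv_cancel₀ this, one_pow]
    linarith
  obtain ⟨v, hv, hvy⟩ := hex
  obtain ⟨s, hs⟩ := hinv _ hvy
  set w := s * v with hw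
  have hwm : w ∈ m := m.mul_mem_left _ hv
  have hwy : w * y - 1 ∈ m := by rw [hw, mul_assoc]; exact hs
  have hsm : ∀ (c : ℂ), ∀ x ∈ m, c • x ∈ m := by
    intro c x hx
    rw [Algebra.smul_def]; exact m.mul_mem_left _ hx
  -- a small nonzero scalar
  obtain ⟨t, ht0, ht⟩ : ∃ t : ℂ, t ≠ 0 ∧ ‖t • w‖ < 1 := by
    have hp : (0 : ℝ) < (‖w‖ + 1)⁻¹ := by positivity
    refine ⟨(((‖w‖ + 1)⁻¹ : ℝ) : ℂ), by exact_mod_cast hp.ne', ?_⟩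
    rw [norm_smul, Complex.norm_real, Real.norm_of_nonneg hp.le, inv_mul_lt_one₀ (by positivity)]
    linarith
  have hu : IsUnit (1 + t • w) := by
    have := isUnit_one_sub_of_norm_lt_one (x := -(t • w)) (by simpa using ht)
    simpa using this
  obtain ⟨u, hu⟩ := hu
  have hum : (u : C) - 1 ∈ m := by rw [hu]; simpa using hsm t w hwm
  have huim : (↑u⁻¹ : C) - 1 ∈ m := by
    have e : (↑u⁻¹ : C) - 1 = -(↑u⁻¹ * ((u : C) - 1)) := by
      rw [mul_sub, Units.inv_mul]; simp
    rw [e]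
    exact m.neg_mem (m.mul_mem_left _ hum)
  set b : C := u * y * ↑u⁻¹ with hbdef
  have hb : spectralRadius ℂ b = 0 := by
    rw [← hy, spectralRadius, spectralRadius, hbdef, spectrum.units_conjugate]
  obtain ⟨K, hK⟩ := h b
  have hr : spectralRadius ℂ (b + -y) = 0 :=
    aux_liouville b (-y) K hb (fun l => by simpa using hK (-l))
  have hmem : algebraMap ℂ C t - (b + -y) ∈ m := by
    have e : algebraMap ℂ C t - (b + -y) =
        -(t • (w * y - 1) + (u * y) * (↑u⁻¹ - 1)) := by
      rw [mul_sub, ← hbdef, hu, Algebra.algebraMap_eq_smul_one, add_mul, smul_mul_assoc, smul_sub]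
      noncomm_ring
    rw [e]
    exact m.neg_mem (m.add_mem (hsm _ _ hwy) (m.mul_mem_left _ huim))
  have : t ∈ resolventSet ℂ (b + -y) := by
    apply spectrum.mem_resolventSet_of_spectralRadius_lt
    rw [hr]
    exact_mod_cast (by simpa using ht0 : 0 < ‖t‖₊)
  exact hnu _ hmem this
end aux

section quot
set_option linter.unusedSectionVars false
variable {B : Type*} [NormedRing B] [NormedAlgebra ℂ B] [CompleteSpace B] [NormOneClass B]

/-- The additive subgroup underlying a two-sided ideal. -/
def auxSub (J : TwoSidedIdeal B) : AddSubgroup B where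
  carrier := J
  zero_mem' := J.zero_mem
  add_mem' := J.add_mem
  neg_mem' := J.neg_mem

theorem aux_mk_eq (J : TwoSidedIdeal B) (x y : B) :
    J.ringCon.mk' x = J.ringCon.mk' y ↔ x - y ∈ J :=
  Iff.trans (RingCon.eq J.ringCon) (J.rel_iff x y)

theorem aux_mk_surj (J : TwoSidedIdeal B) : Function.Surjective J.ringCon.mk' :=
  J.ringCon.mk'_surjective

/-- The additive map from the ring quotient to the additive quotient. -/
noncomputable def auxHom (J : TwoSidedIdeal B) : J.ringCon.Quotient →+ B ⧸ auxSub J where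
  toFun := Quotient.lift (fun b : B => (b : B ⧸ auxSub J)) (fun a b hab => by
    rw [QuotientAddGroup.eq_iff_sub_mem]
    exact (J.rel_iff a b).1 hab)
  map_zero' := rfl
  map_add' := by
    intro x y
    obtain ⟨x, rfl⟩ := aux_mk_surj J x
    obtain ⟨y, rfl⟩ := aux_mk_surj J y
    rfl

theorem auxHom_mk (J : TwoSidedIdeal B) (b : B) :
    auxHom J (J.ringCon.mk' b) = (b : B ⧸ auxSub J) := rfl

theorem auxHom_inj (J : TwoSidedIdeal B) : Function.Injective (auxHom J) := by
  intro x y h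
  obtain ⟨x, rfl⟩ := aux_mk_surj J x
  obtain ⟨y, rfl⟩ := aux_mk_surj J y
  rw [auxHom_mk, auxHom_mk, QuotientAddGroup.eq_iff_sub_mem] at h
  exact (aux_mk_eq J x y).2 h

theorem auxHom_surj (J : TwoSidedIdeal B) : Function.Surjective (auxHom J) := by
  intro x
  obtain ⟨x, rfl⟩ := QuotientAddGroup.mk_surjective x
  exact ⟨J.ringCon.mk' x, rfl⟩

theorem auxHom_mul (J : TwoSidedIdeal B) (x y : J.ringCon.Quotient) :
    ‖auxHom J (x * y)‖ ≤ ‖auxHom J x‖ * ‖auxHom J y‖ := by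
  have key : ∀ ε : ℝ, 0 < ε →
      ‖auxHom J (x * y)‖ ≤ (‖auxHom J x‖ + ε) * (‖auxHom J y‖ + ε) := by
    intro ε hε
    obtain ⟨a, ha, ha'⟩ := QuotientAddGroup.exists_norm_mk_lt (auxHom J x) hε
    obtain ⟨b, hb, hb'⟩ := QuotientAddGroup.exists_norm_mk_lt (auxHom J y) hε
    have hx : x = J.ringCon.mk' a := auxHom_inj J ha.symm
    have hy : y = J.ringCon.mk' b := auxHom_inj J hb.symm
    have e : auxHom J (x * y) = ((a * b : B) : B ⧸ auxSub J) := by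
      rw [hx, hy, ← map_mul, auxHom_mk]
    rw [e]
    refine QuotientAddGroup.norm_mk_le_norm.trans ((norm_mul_le a b).trans ?_)
    gcongr
  have ht : Filter.Tendsto (fun ε : ℝ => (‖auxHom J x‖ + ε) * (‖auxHom J y‖ + ε))
      (nhdsWithin 0 (Set.Ioi 0)) (nhds ((‖auxHom J x‖ + 0) * (‖auxHom J y‖ + 0))) := by
    apply Filter.Tendsto.mono_left _ nhdsWithin_le_nhds
    apply Continuous.tendsto
    fun_prop
  rw [add_zero, add_zero] at ht
  exact ge_of_tendsto ht (Filter.eventually_of_mem self_mem_nhdsWithin key)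

/-- The quotient as a normed ring. -/
@[reducible] noncomputable def auxNormedRing (J : TwoSidedIdeal B)
    [hJ : IsClosed (auxSub J : Set B)] : NormedRing J.ringCon.Quotient :=
  { (inferInstance : Ring J.ringCon.Quotient),
    NormedAddCommGroup.induced J.ringCon.Quotient (B ⧸ auxSub J) (auxHom J) (auxHom_inj J) with
    norm_mul_le := auxHom_mul J }

theorem aux_main (J : TwoSidedIdeal B) (hJclosed : IsClosed (J : Set B)) (hJ : J ≠ ⊤)
    (hsemisimple : (⊥ : TwoSidedIdeal J.ringCon.Quotient).jacobson = ⊥)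
    (y : J.ringCon.Quotient)
    (h : ∀ b : J.ringCon.Quotient, ∃ K : ℝ≥0, ∀ l : ℂ,
      spectralRadius ℂ (b + algebraMap ℂ J.ringCon.Quotient l * y) ≤ K) : y = 0 := by
  have : IsClosed (auxSub J : Set B) := hJclosed
  let _ : NormedRing J.ringCon.Quotient := auxNormedRing J
  have hn : ∀ x : J.ringCon.Quotient, ‖x‖ = ‖auxHom J x‖ := fun _ => rfl
  let _ : NormedAlgebra ℂ J.ringCon.Quotient :=
    { TwoSidedIdeal.quotientAlgebra J with
      norm_smul_le := by
        intro c x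
        have e2 : ‖J.ringCon.mk' (algebraMap ℂ B c)‖ ≤ ‖c‖ := by
          rw [hn, auxHom_mk]
          refine QuotientAddGroup.norm_mk_le_norm.trans ?_
          rw [norm_algebraMap']
        refine (norm_mul_le (J.ringCon.mk' (algebraMap ℂ B c)) x).trans ?_
        gcongr }
  have hi : Isometry (auxHom J) := AddMonoidHomClass.isometry_of_norm _ (fun x => rfl)
  have : CompleteSpace J.ringCon.Quotient :=
    (hi.isUniformInducing.completeSpace_congr (auxHom_surj J)).2 inferInstance
  have : NormOneClass J.ringCon.Quotient := by
    constructor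
    have h1 : ‖(1 : J.ringCon.Quotient)‖ ≤ 1 := by
      rw [← map_one J.ringCon.mk', hn, auxHom_mk]
      exact QuotientAddGroup.norm_mk_le_norm.trans (by rw [norm_one])
    have h2 : (1 : J.ringCon.Quotient) ≠ 0 := by
      intro h10
      apply hJ
      have h1J : (1 : B) ∈ J := by
        have := (aux_mk_eq J 1 0).1 (by rw [map_one, map_zero]; exact h10)
        simpa using this
      rw [eq_top_iff]
      intro x _
      simpa using J.mul_mem_left x 1 h1J
    have h3 : 0 < ‖(1 : J.ringCon.Quotient)‖ := norm_pos_iff.2 h2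
    have h4 := norm_mul_le (1 : J.ringCon.Quotient) 1
    rw [one_mul] at h4
    nlinarith
  have hy : y ∈ (⊥ : TwoSidedIdeal J.ringCon.Quotient).jacobson := by
    have hj : y ∈ (TwoSidedIdeal.asIdeal (⊥ : TwoSidedIdeal J.ringCon.Quotient)).jacobson := by
      refine Ideal.mem_sInf.2 ?_
      rintro m ⟨-, hm⟩
      refine aux_jacobson y (fun b => ?_) m hm
      obtain ⟨K, hK⟩ := h b
      exact ⟨K, fun l => by rw [Algebra.smul_def]; exact hK l⟩
    rw [← TwoSidedIdeal.asIdeal_jacobson] at hj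
    exact hj
  rw [hsemisimple] at hy
  simpa using hy

theorem aux_smul (L : TwoSidedIdeal B) (c : ℂ) (x : B) :
    L.ringCon.mk' (c • x) = algebraMap ℂ L.ringCon.Quotient c * L.ringCon.mk' x := by
  rw [Algebra.smul_def, map_mul]; rfl

theorem aux_radius_le (L : TwoSidedIdeal B) (x : B) :
    spectralRadius ℂ (L.ringCon.mk' x) ≤ ‖x‖₊ := by
  refine le_trans ?_ (spectrum.spectralRadius_le_nnnorm (𝕜 := ℂ) x)
  refine iSup₂_le fun k hk => le_iSup₂_of_le k ?_ le_rfl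
  intro hu
  apply hk
  have := IsUnit.map L.ringCon.mk' hu
  rw [map_sub] at this
  exact this

end quot

/-- Proposition on essentially spectrally bounded operators:
equivalence of (a) essentially spectrally bounded + surjective modulo `J` with
(b) `T I ⊆ J` and the induced map on the quotients is spectrally bounded and surjective. -/
theorem essentially_spectrally_bounded_iff
    {A B : Type*}
    [NormedRing A] [NormedAlgebra ℂ A] [CompleteSpace A] [NormOneClass A]
    [NormedRing B] [NormedAlgebra ℂ B] [CompleteSpace B] [NormOneClass B]
    (I : TwoSidedIdeal A) (J : TwoSidedIdeal B)
    (hIclosed : IsClosed (I : Set A)) (hJclosed : IsClosed (J : Set B))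
    (hIproper : I ≠ ⊤) (hJproper : J ≠ ⊤)
    (hsemisimple : (⊥ : TwoSidedIdeal J.ringCon.Quotient).jacobson = ⊥)
    (T : A →ₗ[ℂ] B) :
    ((∃ M : ℝ≥0, ∀ x : A,
        spectralRadius ℂ (J.ringCon.mk' (T x)) ≤ (M : ℝ≥0∞) * spectralRadius ℂ (I.ringCon.mk' x)) ∧
      (∀ y : B, ∃ x : A, y - T x ∈ J)) ↔
    ((∀ x ∈ I, T x ∈ J) ∧
      ∃ That : I.ringCon.Quotient →ₗ[ℂ] J.ringCon.Quotient,
        (∀ x : A, That (I.ringCon.mk' x) = J.ringCon.mk' (T x)) ∧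
        (∃ M : ℝ≥0, ∀ z : I.ringCon.Quotient,
          spectralRadius ℂ (That z) ≤ (M : ℝ≥0∞) * spectralRadius ℂ z) ∧
        Function.Surjective That) := by
  constructor
  · rintro ⟨⟨M, hM⟩, hsurj⟩
    have hIJ : ∀ x ∈ I, T x ∈ J := by
      intro x hx
      have hx0 : I.ringCon.mk' x = 0 := by
        rw [← map_zero I.ringCon.mk', aux_mk_eq]; simpa using hx
      have h0 : J.ringCon.mk' (T x) = 0 := by
        apply aux_main J hJclosed hJproper hsemisimple
        intro b
        obtain ⟨b, rfl⟩ := aux_mk_surj J b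
        obtain ⟨a, ha⟩ := hsurj b
        have hb : J.ringCon.mk' b = J.ringCon.mk' (T a) := (aux_mk_eq J _ _).2 ha
        refine ⟨M * ‖a‖₊, fun l => ?_⟩
        have e : J.ringCon.mk' b + algebraMap ℂ J.ringCon.Quotient l * J.ringCon.mk' (T x) =
            J.ringCon.mk' (T (a + l • x)) := by
          rw [hb, map_add, map_smul, map_add, aux_smul]
        have e2 : I.ringCon.mk' (a + l • x) = I.ringCon.mk' a := by
          rw [map_add, aux_smul, hx0, mul_zero, add_zero]
        rw [e]
        refine (hM _).trans ?_
        rw [e2, ENNReal.coe_mul]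
        gcongr
        exact aux_radius_le I a
      have := (aux_mk_eq J (T x) 0).1 (by rw [h0, map_zero])
      simpa using this
    refine ⟨hIJ, ?_⟩
    let f : I.ringCon.Quotient → J.ringCon.Quotient :=
      Quotient.lift (fun a : A => J.ringCon.mk' (T a)) (fun a b hab => by
        rw [aux_mk_eq, ← map_sub]
        exact hIJ _ ((I.rel_iff a b).1 hab))
    have hf : ∀ a : A, f (I.ringCon.mk' a) = J.ringCon.mk' (T a) := fun _ => rfl
    let That : I.ringCon.Quotient →ₗ[ℂ] J.ringCon.Quotient :=
      { toFun := f
        map_add' := by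
          intro x y
          obtain ⟨x, rfl⟩ := aux_mk_surj I x
          obtain ⟨y, rfl⟩ := aux_mk_surj I y
          rw [← map_add, hf, hf, hf, map_add, map_add]
        map_smul' := by
          intro c x
          obtain ⟨x, rfl⟩ := aux_mk_surj I x
          rw [RingHom.id_apply, Algebra.smul_def, Algebra.smul_def, ← aux_smul, hf, hf, map_smul,
            aux_smul] }
    refine ⟨That, hf, ⟨M, fun z => ?_⟩, fun z => ?_⟩
    · obtain ⟨x, rfl⟩ := aux_mk_surj I z
      exact hM x
    · obtain ⟨y, rfl⟩ := aux_mk_surj J z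
      obtain ⟨x, hx⟩ := hsurj y
      exact ⟨I.ringCon.mk' x, ((aux_mk_eq J _ _).2 hx).symm⟩
  · rintro ⟨hIJ, That, hT, ⟨M, hM⟩, hs⟩
    refine ⟨⟨M, fun x => ?_⟩, fun y => ?_⟩
    · rw [← hT]; exact hM _
    · obtain ⟨z, hz⟩ := hs (J.ringCon.mk' y)
      obtain ⟨x, rfl⟩ := aux_mk_surj I z
      refine ⟨x, (aux_mk_eq J _ _).1 ?_⟩
      rw [← hz, hT]
end

section
/- Let T : Mₙ(ℂ) → Mₙ(ℂ) be a unital surjective spectrally bounded linear map. Then there exist a Jordan automorphism S of Mₙ(ℂ) and γ ∈ ℂ \ {0} such that Tx = γ·Sx + (1−γ)·τ(x)·1 for all x ∈ Mₙ(ℂ), where τ is the normalized trace. -/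
open scoped ENNReal NNReal

lemma trace_pow_bound {n : ℕ} (y : Matrix (Fin n) (Fin n) ℂ) (R : ℝ≥0)
    (hR : spectralRadius ℂ y ≤ R) (k : ℕ) : ‖Matrix.trace (y ^ k)‖ ≤ n * (R : ℝ) ^ k := by
  rw [Matrix.trace_eq_sum_roots_charpoly]
  have hroot : ∀ μ ∈ (y ^ k).charpoly.roots, ‖μ‖ ≤ (R : ℝ) ^ k := by
    intro μ hμ
    have h1 : (y ^ k).charpoly.IsRoot μ := Polynomial.isRoot_of_mem_roots hμ
    rw [← Matrix.mem_spectrum_iff_isRoot_charpoly] at h1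
    rcases Nat.eq_zero_or_pos n with h0 | h0
    · subst h0
      simp [spectrum.of_subsingleton] at h1
    have : Nonempty (Fin n) := ⟨⟨0, h0⟩⟩
    have hne : (spectrum ℂ y).Nonempty := spectrum.nonempty_of_isAlgClosed_of_finiteDimensional ℂ y
    rw [spectrum.map_pow_of_nonempty hne] at h1
    obtain ⟨l, hl, rfl⟩ := h1
    simp only [norm_pow]
    have : (‖l‖₊ : ℝ≥0∞) ≤ R := le_trans (le_iSup₂ (f := fun k _ => (‖k‖₊ : ℝ≥0∞)) l hl) hR
    have h2 : ‖l‖₊ ≤ R := by exact_mod_cast this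
    gcongr
    exact_mod_cast h2
  have hcard : (y ^ k).charpoly.roots.card ≤ n := by
    have := Polynomial.card_roots' (y ^ k).charpoly
    simpa [Matrix.charpoly_natDegree_eq_dim] using this
  calc ‖(y ^ k).charpoly.roots.sum‖ ≤ ((y ^ k).charpoly.roots.map (fun μ => ‖μ‖)).sum := norm_multiset_sum_le _
    _ ≤ ((y ^ k).charpoly.roots.map (fun μ => ‖μ‖)).card • (R : ℝ) ^ k := by
      apply Multiset.sum_le_card_nsmul
      intro x hx
      rw [Multiset.mem_map] at hx
      obtain ⟨μ, hμ, rfl⟩ := hx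
      exact hroot μ hμ
    _ ≤ n * (R : ℝ) ^ k := by
      rw [Multiset.card_map, nsmul_eq_mul]
      gcongr

lemma radius_lt_top {n : ℕ} (y : Matrix (Fin n) (Fin n) ℂ) : ∃ R : ℝ≥0, spectralRadius ℂ y = R := by
  have hfin : (spectrum ℂ y).Finite := by
    exact Matrix.finite_spectrum y
  refine ⟨(spectralRadius ℂ y).toNNReal, (ENNReal.coe_toNNReal ?_).symm⟩
  unfold spectralRadius
  have : BddAbove ((fun k : ℂ => ‖k‖₊) '' spectrum ℂ y) := (hfin.image _).bddAbove
  obtain ⟨b, hb⟩ := this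
  refine ne_top_of_le_ne_top (b := (b : ℝ≥0∞)) (by simp) (iSup₂_le fun k hk => ?_)
  exact_mod_cast hb ⟨k, hk, rfl⟩

lemma trace_inv {n : ℕ} 
    (T : Matrix (Fin n) (Fin n) ℂ →ₗ[ℂ] Matrix (Fin n) (Fin n) ℂ)
    (M : ℝ≥0) (hsb : ∀ x, spectralRadius ℂ (T x) ≤ (M : ℝ≥0∞) * spectralRadius ℂ x)
    (s : Matrix (Fin n) (Fin n) ℂ) (hs : s * s = 1) (x : Matrix (Fin n) (Fin n) ℂ) (k : ℕ) :
    Matrix.trace ((T (s * x * s)) ^ k) = Matrix.trace ((T x) ^ k) := by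
  letI := Matrix.linftyOpNormedRing (n := Fin n) (α := ℂ)
  letI := Matrix.linftyOpNormedAlgebra (n := Fin n) (α := ℂ) (R := ℂ)
  set p : Matrix (Fin n) (Fin n) ℂ := (1 / 2 : ℂ) • (1 - s) with hp
  have hpp : p * p = p := by
    rw [hp, smul_mul_smul_comm, sub_mul, mul_sub, mul_sub, hs]
    simp only [one_mul, mul_one]
    module
  let g : ℂ → Matrix (Fin n) (Fin n) ℂ := fun l => 1 + (Complex.exp l - 1) • p
  have hgg : ∀ l, g l * g (-l) = 1 := by
    intro l
    simp only [g, add_mul, mul_add, one_mul, mul_one, smul_mul_smul_comm, hpp]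
    have : Complex.exp l * Complex.exp (-l) = 1 := by rw [← Complex.exp_add]; simp
    have h3 : (Complex.exp l - 1) * (Complex.exp (-l) - 1) = 2 - Complex.exp l - Complex.exp (-l) := by
      linear_combination this
    rw [h3]
    module
  have hg0 : g 0 = 1 := by simp [g]
  have hgpi : g (Real.pi * Complex.I) = s := by
    simp only [g, Complex.exp_pi_mul_I, hp]; module
  have hgpi' : g (-(Real.pi * Complex.I)) = s := by
    simp only [g, Complex.exp_neg, Complex.exp_pi_mul_I, hp]
    norm_num
    module
  let Tc := LinearMap.toContinuousLinearMap T
  let trc := LinearMap.toContinuousLinearMap (Matrix.traceLinearMap (Fin n) ℂ ℂ)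
  let F : ℂ → ℂ := fun l => trc ((Tc (g l * x * g (-l))) ^ k)
  have hdg : Differentiable ℂ g := by
    simp only [g]; fun_prop
  have hF : Differentiable ℂ F := by
    simp only [F]
    fun_prop
  obtain ⟨R, hR⟩ := radius_lt_top x
  have hconj : ∀ l, spectralRadius ℂ (g l * x * g (-l)) = R := by
    intro l
    rw [← hR]
    let u : (Matrix (Fin n) (Fin n) ℂ)ˣ := ⟨g l, g (-l), hgg l, by simpa using hgg (-l)⟩
    have : spectrum ℂ (g l * x * g (-l)) = spectrum ℂ x := spectrum.units_conjugate (u := u) 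
    unfold spectralRadius
    rw [this]
  have hb : Bornology.IsBounded (Set.range F) := by
    rw [isBounded_iff_forall_norm_le]
    refine ⟨n * ((M * R : ℝ≥0) : ℝ) ^ k, ?_⟩
    rintro _ ⟨l, rfl⟩
    apply trace_pow_bound
    have := hsb (g l * x * g (-l))
    rw [hconj] at this
    simpa [Tc] using this
  have := hF.apply_eq_apply_of_bounded hb (Real.pi * Complex.I) 0
  simp only [F, hgpi, hgpi', neg_zero, hg0, one_mul, mul_one] at this
  exact this

lemma trace_inv_two {n : ℕ} 
    (T : Matrix (Fin n) (Fin n) ℂ →ₗ[ℂ] Matrix (Fin n) (Fin n) ℂ)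
    (s : Matrix (Fin n) (Fin n) ℂ)
    (h : ∀ x, ∀ k : ℕ, Matrix.trace ((T (s * x * s)) ^ k) = Matrix.trace ((T x) ^ k))
    (x y : Matrix (Fin n) (Fin n) ℂ) :
    Matrix.trace (T (s * x * s) * T (s * y * s)) = Matrix.trace (T x * T y) := by
  have key : ∀ a b : Matrix (Fin n) (Fin n) ℂ, Matrix.trace ((a + b) ^ 2) =
      Matrix.trace (a ^ 2) + Matrix.trace (b ^ 2) + 2 * Matrix.trace (a * b) := by
    intro a b
    simp only [pow_two, add_mul, mul_add, Matrix.trace_add, Matrix.trace_mul_comm b a]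
    ring
  have h1 := h (x + y) 2
  have h2 := h x 2
  have h3 := h y 2
  simp only [mul_add, add_mul, map_add, key] at h1
  linear_combination (h1 - h2 - h3) / 2

lemma trace_inv_three {n : ℕ} 
    (T : Matrix (Fin n) (Fin n) ℂ →ₗ[ℂ] Matrix (Fin n) (Fin n) ℂ)
    (s : Matrix (Fin n) (Fin n) ℂ)
    (h : ∀ x, ∀ k : ℕ, Matrix.trace ((T (s * x * s)) ^ k) = Matrix.trace ((T x) ^ k))
    (x y z : Matrix (Fin n) (Fin n) ℂ) :
    Matrix.trace ((T (s * x * s) * T (s * y * s) + T (s * y * s) * T (s * x * s)) * T (s * z * s))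
      = Matrix.trace ((T x * T y + T y * T x) * T z) := by
  have key : ∀ a b c : Matrix (Fin n) (Fin n) ℂ, 3 * Matrix.trace ((a * b + b * a) * c) =
      Matrix.trace ((a + b + c) ^ 3) - Matrix.trace ((a + b) ^ 3) - Matrix.trace ((a + c) ^ 3)
      - Matrix.trace ((b + c) ^ 3) + Matrix.trace (a ^ 3) + Matrix.trace (b ^ 3)
      + Matrix.trace (c ^ 3) := by
    intro a b c
    have e : (a + b + c) ^ 3 - (a + b) ^ 3 - (a + c) ^ 3 - (b + c) ^ 3 + a ^ 3 + b ^ 3 + c ^ 3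
       = a * b * c + b * a * c + a * c * b + b * c * a + c * a * b + c * b * a := by
      noncomm_ring
    have e2 := congrArg Matrix.trace e
    simp only [Matrix.trace_add, Matrix.trace_sub] at e2
    rw [e2, add_mul, Matrix.trace_add, Matrix.trace_mul_cycle a c b, Matrix.trace_mul_cycle b c a,
      Matrix.trace_mul_cycle c a b, Matrix.trace_mul_cycle c b a, Matrix.trace_mul_cycle b c a,
      Matrix.trace_mul_cycle a c b]
    ring_nf
    try rw [Matrix.trace_mul_cycle b c a, Matrix.trace_mul_cycle a c b]
    try ring
  have h' : ∀ x, Matrix.trace ((T (s * x * s)) ^ 3) = Matrix.trace ((T x) ^ 3) := fun x => h x 3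
  have k1 := key (T (s * x * s)) (T (s * y * s)) (T (s * z * s))
  have k2 := key (T x) (T y) (T z)
  simp only [← map_add, ← add_mul, ← mul_add, h'] at k1 k2 ⊢
  have := k1.trans k2.symm
  exact mul_left_cancel₀ (by norm_num) this

lemma exists_phi {n : ℕ} 
    (T : Matrix (Fin n) (Fin n) ℂ →ₗ[ℂ] Matrix (Fin n) (Fin n) ℂ)
    (hT : Function.Bijective T)
    (h : ∀ s : Matrix (Fin n) (Fin n) ℂ, s * s = 1 → ∀ x, ∀ k : ℕ,
      Matrix.trace ((T (s * x * s)) ^ k) = Matrix.trace ((T x) ^ k)) :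
    ∃ Φ : Matrix (Fin n) (Fin n) ℂ →ₗ[ℂ] Matrix (Fin n) (Fin n) ℂ →ₗ[ℂ] Matrix (Fin n) (Fin n) ℂ,
      (∀ x y, T (Φ x y) = T x * T y + T y * T x) ∧
      ∀ s, s * s = 1 → ∀ x y, Φ (s * x * s) (s * y * s) = s * Φ x y * s := by
  let e := LinearEquiv.ofBijective T hT
  have he : ∀ z, T (e.symm z) = z := fun z => e.apply_symm_apply z
  let Φ : Matrix (Fin n) (Fin n) ℂ →ₗ[ℂ] Matrix (Fin n) (Fin n) ℂ →ₗ[ℂ] Matrix (Fin n) (Fin n) ℂ :=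
    LinearMap.mk₂ ℂ (fun x y => e.symm (T x * T y + T y * T x))
      (by intros; rw [← map_add]; congr 1; simp only [map_add]; noncomm_ring)
      (by intros; rw [← map_smul]; congr 1; simp)
      (by intros; rw [← map_add]; congr 1; simp only [map_add]; noncomm_ring)
      (by intros; rw [← map_smul]; congr 1; simp)
  have hΦ : ∀ x y, T (Φ x y) = T x * T y + T y * T x := fun x y => he _
  refine ⟨Φ, hΦ, fun s hs x y => ?_⟩
  apply hT.1
  refine Matrix.ext_iff_trace_mul_right.mpr fun w => ?_
  obtain ⟨z, rfl⟩ := hT.2 w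
  have hss : ∀ z, s * (s * z * s) * s = z := by
    intro z
    calc s * (s * z * s) * s = (s * s) * z * (s * s) := by noncomm_ring
      _ = z := by simp [hs]
  rw [hΦ, ← hss z, trace_inv_three T s (h s hs), trace_inv_two T s (h s hs), hΦ]

lemma exists_reflection {n : ℕ} (i j : Fin n) (hij : i ≠ j) (l : ℂ) :
    ∃ t : Matrix (Fin n) (Fin n) ℂ, t * t = 1 ∧ ∀ d : Fin n → ℂ,
      t * Matrix.diagonal d * t = Matrix.diagonal d + (l * (d j - d i)) • Matrix.single i j (1 : ℂ) := by
  have hji := hij.symm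
  have h1 : ∀ d : Fin n → ℂ, Matrix.diagonal d * Matrix.single i j (1 : ℂ) = d i • Matrix.single i j (1 : ℂ) := by
    intro d; ext a b; rw [Matrix.diagonal_mul, Matrix.smul_apply, Matrix.single_apply]
    split_ifs with h
    · simp [h.1]
    · simp
  have h2 : ∀ d : Fin n → ℂ, Matrix.single i j (1 : ℂ) * Matrix.diagonal d = d j • Matrix.single i j (1 : ℂ) := by
    intro d; ext a b; rw [Matrix.mul_diagonal, Matrix.smul_apply, Matrix.single_apply]
    split_ifs with h
    · simp [h.2]
    · simp
  have h3 : Matrix.single i j (1 : ℂ) * Matrix.single i j (1 : ℂ) = 0 := by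
    simp [hij.symm]
  let v : Fin n → ℂ := fun k => if k = i then -1 else 1
  have hvi : v i = -1 := by simp [v]
  have hvj : v j = 1 := by simp [v, hji]
  have hvv : ∀ k, v k * v k = 1 := by intro k; simp only [v]; split_ifs <;> norm_num
  refine ⟨Matrix.diagonal v + l • Matrix.single i j (1 : ℂ), ?_, fun d => ?_⟩
  · simp only [add_mul, mul_add, smul_mul_assoc, mul_smul_comm, h1, h2, h3, hvi, hvj,
      Matrix.diagonal_mul_diagonal, hvv, Matrix.diagonal_one]
    module
  · have h4 : (Matrix.diagonal fun k => v k * d k * v k) = Matrix.diagonal d := by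
      congr 1; ext k; linear_combination (d k) * hvv k
    simp only [add_mul, mul_add, smul_mul_assoc, mul_smul_comm, h1, h2, h3, hvi, hvj,
      Matrix.diagonal_mul_diagonal, h4]
    module

lemma linear_zero {n : ℕ}
    (f : Matrix (Fin n) (Fin n) ℂ →ₗ[ℂ] Matrix (Fin n) (Fin n) ℂ)
    (hd : ∀ d, f (Matrix.diagonal d) = 0) (ho : ∀ i j, i ≠ j → f (Matrix.single i j 1) = 0)
    (x : Matrix (Fin n) (Fin n) ℂ) : f x = 0 := by
  rw [Matrix.matrix_eq_sum_single x, map_sum]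
  refine Finset.sum_eq_zero fun i _ => ?_
  rw [map_sum]
  refine Finset.sum_eq_zero fun j _ => ?_
  have : Matrix.single i j (x i j) = x i j • Matrix.single i j (1 : ℂ) := by simp
  rw [this, map_smul]
  by_cases h : i = j
  · subst h
    rw [← Matrix.diagonal_single, hd, smul_zero]
  · rw [ho i j h, smul_zero]

lemma bilin_zero {n : ℕ}
    (Ψ : Matrix (Fin n) (Fin n) ℂ →ₗ[ℂ] Matrix (Fin n) (Fin n) ℂ →ₗ[ℂ] Matrix (Fin n) (Fin n) ℂ)
    (hsym : ∀ x y, Ψ x y = Ψ y x)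
    (heq : ∀ s, s * s = 1 → ∀ x y, Ψ (s * x * s) (s * y * s) = s * Ψ x y * s)
    (hD : ∀ d d', Ψ (Matrix.diagonal d) (Matrix.diagonal d') = 0)
    (x y : Matrix (Fin n) (Fin n) ℂ) : Ψ x y = 0 := by
  have step0 : ∀ i j, i ≠ j → ∀ d d' : Fin n → ℂ,
      (d' j - d' i) • Ψ (Matrix.single i j 1) (Matrix.diagonal d) +
      (d j - d i) • Ψ (Matrix.single i j 1) (Matrix.diagonal d') = 0 := by
    intro i j hij d d'
    have main : ∀ l : ℂ, Ψ (Matrix.diagonal d + (l * (d j - d i)) • Matrix.single i j (1 : ℂ))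
        (Matrix.diagonal d' + (l * (d' j - d' i)) • Matrix.single i j (1 : ℂ)) = 0 := by
      intro l
      obtain ⟨t, ht, htd⟩ := exists_reflection i j hij l
      rw [← htd, ← htd, heq t ht, hD]; simp
    have m1 := main 1
    have m2 := main (-1)
    simp only [map_add, map_smul, LinearMap.add_apply, LinearMap.smul_apply, hD,
      hsym (Matrix.diagonal d) (Matrix.single i j 1)] at m1 m2
    linear_combination (norm := module) (1 / 2 : ℂ) • m1 - (1 / 2 : ℂ) • m2
  have step1 : ∀ i j, i ≠ j → ∀ d : Fin n → ℂ,
      Ψ (Matrix.single i j 1) (Matrix.diagonal d) = 0 := by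
    intro i j hij d
    have a1 := step0 i j hij (Pi.single j 1) (Pi.single j 1)
    have a2 := step0 i j hij (Pi.single j 1) d
    simp only [Pi.single_eq_same, Pi.single_eq_of_ne hij, sub_zero, one_smul] at a1 a2
    have a3 : Ψ (Matrix.single i j 1) (Matrix.diagonal (Pi.single j 1)) = 0 := by
      linear_combination (norm := module) (1 / 2 : ℂ) • a1
    rw [a3] at a2
    simpa using a2
  have step2 : ∀ x, ∀ d : Fin n → ℂ, Ψ x (Matrix.diagonal d) = 0 := by
    intro x d
    exact linear_zero (Ψ.flip (Matrix.diagonal d)) (fun d' => hD d' d)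
      (fun i j hij => step1 i j hij d) x
  refine linear_zero (Ψ x) (step2 x) (fun i j hij => ?_) y
  obtain ⟨t, ht, htd⟩ := exists_reflection i j hij 1
  have hss : t * (t * x * t) * t = x := by
    calc t * (t * x * t) * t = (t * t) * x * (t * t) := by noncomm_ring
      _ = x := by simp [ht]
  have := heq t ht (t * x * t) (Matrix.diagonal (Pi.single j 1))
  rw [hss, htd, step2, map_add, step2, map_smul] at this
  simpa [Pi.single_eq_of_ne hij] using this

lemma comb {n : ℕ} (m : Fin n → Fin n → Fin n → ℂ)
    (hsym : ∀ i j k, m i j k = m j i k)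
    (hperm : ∀ (σ : Equiv.Perm (Fin n)) i j k, m (σ i) (σ j) (σ k) = m i j k) :
    ∃ α β a b : ℂ, ∀ i j k, m i j k = b + a * ((if i = k then 1 else 0) + (if j = k then 1 else 0))
      + (if i = j then α * (if i = k then 1 else 0) + β else 0) := by
  have two : ∀ i k i' k' : Fin n, i ≠ k → i' ≠ k' → ∃ σ : Equiv.Perm (Fin n), σ i = i' ∧ σ k = k' := by
    intro i k i' k' h h'
    obtain ⟨σ, hσ⟩ := Equiv.Perm.exists_extending_pair ![i, k] ![i', k']
      (by intro a b; fin_cases a <;> fin_cases b <;> simp [h, h.symm])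
      (by intro a b; fin_cases a <;> fin_cases b <;> simp [h', h'.symm])
    exact ⟨σ, by simpa using hσ 0, by simpa using hσ 1⟩
  have three : ∀ i j k i' j' k' : Fin n, i ≠ j → i ≠ k → j ≠ k → i' ≠ j' → i' ≠ k' → j' ≠ k' →
      ∃ σ : Equiv.Perm (Fin n), σ i = i' ∧ σ j = j' ∧ σ k = k' := by
    intro i j k i' j' k' h1 h2 h3 h1' h2' h3'
    obtain ⟨σ, hσ⟩ := Equiv.Perm.exists_extending_pair ![i, j, k] ![i', j', k']
      (by intro a b; fin_cases a <;> fin_cases b <;> simp [h1, h1.symm, h2, h2.symm, h3, h3.symm])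
      (by intro a b; fin_cases a <;> fin_cases b <;>
            simp [h1', h1'.symm, h2', h2'.symm, h3', h3'.symm])
    exact ⟨σ, by simpa using hσ 0, by simpa using hσ 1, by simpa using hσ 2⟩
  have e1 : ∃ c, ∀ i, m i i i = c := by
    by_cases h : ∃ i : Fin n, True
    · obtain ⟨i, -⟩ := h
      refine ⟨m i i i, fun k => ?_⟩
      have := hperm (Equiv.swap i k) i i i
      simpa using this
    · exact ⟨0, fun i => (h ⟨i, trivial⟩).elim⟩
  have e2 : ∃ c, ∀ i k, i ≠ k → m i i k = c := by
    by_cases h : ∃ i k : Fin n, i ≠ k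
    · obtain ⟨i, k, hik⟩ := h
      refine ⟨m i i k, fun i' k' h' => ?_⟩
      obtain ⟨σ, rfl, rfl⟩ := two i k i' k' hik h'
      exact hperm σ i i k
    · exact ⟨0, fun i k h' => (h ⟨i, k, h'⟩).elim⟩
  have e3 : ∃ c, ∀ i j, i ≠ j → m i j i = c := by
    by_cases h : ∃ i k : Fin n, i ≠ k
    · obtain ⟨i, k, hik⟩ := h
      refine ⟨m i k i, fun i' k' h' => ?_⟩
      obtain ⟨σ, rfl, rfl⟩ := two i k i' k' hik h'
      exact hperm σ i k i
    · exact ⟨0, fun i k h' => (h ⟨i, k, h'⟩).elim⟩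
  have e4 : ∃ c, ∀ i j k, i ≠ j → i ≠ k → j ≠ k → m i j k = c := by
    by_cases h : ∃ i j k : Fin n, i ≠ j ∧ i ≠ k ∧ j ≠ k
    · obtain ⟨i, j, k, h1, h2, h3⟩ := h
      refine ⟨m i j k, fun i' j' k' h1' h2' h3' => ?_⟩
      obtain ⟨σ, rfl, rfl, rfl⟩ := three i j k i' j' k' h1 h2 h3 h1' h2' h3'
      exact hperm σ i j k
    · exact ⟨0, fun i j k h1' h2' h3' => (h ⟨i, j, k, h1', h2', h3'⟩).elim⟩
  obtain ⟨c1, e1⟩ := e1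
  obtain ⟨c2, e2⟩ := e2
  obtain ⟨c3, e3⟩ := e3
  obtain ⟨c4, e4⟩ := e4
  refine ⟨c1 - c2 - 2 * (c3 - c4), c2 - c4, c3 - c4, c4, fun i j k => ?_⟩
  by_cases hij : i = j
  · subst hij
    by_cases hik : i = k
    · subst hik; simp [e1]; ring
    · simp [hik, e2 i k hik]
  · by_cases hik : i = k
    · subst hik; simp [hij, Ne.symm hij, e3 i j hij]
    · by_cases hjk : j = k
      · subst hjk; simp [hij, hsym i j j, e3 j i (Ne.symm hij)]
      · simp [hij, hik, hjk, e4 i j k hij hik hjk]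

lemma phi_form {n : ℕ}
    (Φ : Matrix (Fin n) (Fin n) ℂ →ₗ[ℂ] Matrix (Fin n) (Fin n) ℂ →ₗ[ℂ] Matrix (Fin n) (Fin n) ℂ)
    (hsym : ∀ x y, Φ x y = Φ y x)
    (heq : ∀ s, s * s = 1 → ∀ x y, Φ (s * x * s) (s * y * s) = s * Φ x y * s) :
    ∃ A β a b : ℂ, ∀ x y, Φ x y = A • (x * y + y * x) + a • (x.trace • y + y.trace • x)
      + (β * (x * y).trace + b * (x.trace * y.trace)) • (1 : Matrix (Fin n) (Fin n) ℂ) := by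
  let E : Fin n → Matrix (Fin n) (Fin n) ℂ := fun i => Matrix.diagonal (Pi.single i 1)
  -- off-diagonal entries vanish
  have hoff : ∀ i j k l, k ≠ l → Φ (E i) (E j) k l = 0 := by
    intro i j k l hkl
    let v : Fin n → ℂ := fun q => if q = k then -1 else 1
    have hvv : ∀ q, v q * v q = 1 := by intro q; simp only [v]; split_ifs <;> norm_num
    have hs : Matrix.diagonal v * Matrix.diagonal v = 1 := by
      rw [Matrix.diagonal_mul_diagonal]; simp only [hvv, Matrix.diagonal_one]
    have hE : ∀ i, Matrix.diagonal v * E i * Matrix.diagonal v = E i := by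
      intro i
      simp only [E, Matrix.diagonal_mul_diagonal]
      congr 1; ext q; linear_combination (Pi.single i 1 : Fin n → ℂ) q * hvv q
    have h := heq _ hs (E i) (E j)
    rw [hE, hE] at h
    have h2 := congrFun (congrFun h k) l
    rw [Matrix.mul_diagonal, Matrix.diagonal_mul] at h2
    simp only [v, if_true, if_neg hkl.symm] at h2
    linear_combination h2 / 2
  have hswap : ∀ (p q : Fin n) i j k, Φ (E (Equiv.swap p q i)) (E (Equiv.swap p q j))
      (Equiv.swap p q k) (Equiv.swap p q k) = Φ (E i) (E j) k k := by
    intro p q i j k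
    let σ := Equiv.swap p q
    let s : Matrix (Fin n) (Fin n) ℂ := (1 : Matrix (Fin n) (Fin n) ℂ).submatrix σ id
    have hσ : ∀ t, σ (σ t) = t := fun t => Equiv.swap_apply_self p q t
    have hsy : s = (1 : Matrix (Fin n) (Fin n) ℂ).submatrix id σ := by
      ext a b
      simp only [s, Matrix.submatrix_apply, id, Matrix.one_apply]
      congr 1
      apply propext
      constructor
      · rintro rfl; exact (hσ a).symm
      · rintro rfl; exact hσ b
    have hconj : ∀ m : Matrix (Fin n) (Fin n) ℂ, s * m * s = m.submatrix σ σ := by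
      intro m
      have h1 : s * m = m.submatrix σ id := Matrix.one_submatrix_mul (e₁ := σ) (e₂ := Equiv.refl _) m
      have h2 : ∀ m' : Matrix (Fin n) (Fin n) ℂ, m' * s = m'.submatrix id σ := by
        intro m'
        rw [hsy]
        exact Matrix.mul_submatrix_one (e₁ := Equiv.refl _) (e₂ := σ) m'
      rw [h1, h2]; rfl
    have hss : s * s = 1 := by
      have := hconj 1
      rw [mul_one] at this
      rw [this, Matrix.submatrix_one_equiv]
    have hE : ∀ i, s * E i * s = E (σ i) := by
      intro i
      rw [hconj]
      simp only [E]
      rw [Matrix.submatrix_diagonal_equiv]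
      congr 1
      ext t
      simp only [Function.comp, Pi.single_apply]
      congr 1
      apply propext
      constructor
      · rintro rfl; exact (hσ t).symm
      · rintro rfl; exact hσ i
    have h := heq s hss (E i) (E j)
    rw [hE, hE, hconj] at h
    change Φ (E (σ i)) (E (σ j)) (σ k) (σ k) = _
    rw [h, Matrix.submatrix_apply, hσ]
  have hperm : ∀ (σ : Equiv.Perm (Fin n)) i j k, Φ (E (σ i)) (E (σ j)) (σ k) (σ k)
      = Φ (E i) (E j) k k := by
    intro σ
    induction σ using Equiv.Perm.swap_induction_on with
    | one => intro i j k; rfl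
    | swap_mul f x y hxy ih =>
      intro i j k
      simp only [Equiv.Perm.mul_apply]
      rw [hswap, ih]
  obtain ⟨α, β, a, b, hm⟩ := comb (fun i j k => Φ (E i) (E j) k k)
    (fun i j k => by rw [hsym]) hperm
  refine ⟨α / 2, β, a, b, ?_⟩
  let K : Matrix (Fin n) (Fin n) ℂ →ₗ[ℂ] Matrix (Fin n) (Fin n) ℂ →ₗ[ℂ] Matrix (Fin n) (Fin n) ℂ :=
    LinearMap.mk₂ ℂ (fun x y => (α / 2) • (x * y + y * x) + a • (x.trace • y + y.trace • x)
      + (β * (x * y).trace + b * (x.trace * y.trace)) • (1 : Matrix (Fin n) (Fin n) ℂ))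
      (by intros; simp only [add_mul, mul_add, Matrix.trace_add]; module)
      (by intros; simp only [smul_mul_assoc, mul_smul_comm, Matrix.trace_smul, smul_eq_mul]; module)
      (by intros; simp only [add_mul, mul_add, Matrix.trace_add]; module)
      (by intros; simp only [smul_mul_assoc, mul_smul_comm, Matrix.trace_smul, smul_eq_mul]; module)
  have hK : ∀ x y, K x y = (α / 2) • (x * y + y * x) + a • (x.trace • y + y.trace • x)
      + (β * (x * y).trace + b * (x.trace * y.trace)) • (1 : Matrix (Fin n) (Fin n) ℂ) :=
    fun x y => rfl
  have hEK : ∀ i j, (Φ - K) (E i) (E j) = 0 := by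
    intro i j
    rw [LinearMap.sub_apply, LinearMap.sub_apply, sub_eq_zero]
    ext k l
    rw [hK]
    have hEE : E i * E j = if i = j then E i else 0 := by
      simp only [E, Matrix.diagonal_mul_diagonal]
      split_ifs with h
      · subst h; congr 1; ext q; simp [Pi.single_apply]
      · rw [← Matrix.diagonal_zero]; congr 1; ext q
        simp only [Pi.single_apply]
        split_ifs with h1 h2
        · exact (h (h1.symm.trans h2)).elim
        all_goals simp
    have hEE' : E j * E i = if i = j then E i else 0 := by
      rw [← hEE]; simp only [E, Matrix.diagonal_mul_diagonal, mul_comm]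
    have htr : ∀ i, (E i).trace = 1 := by intro i; simp [E, Matrix.trace_diagonal]
    rw [hEE', hEE, htr, htr]
    by_cases hkl : k = l
    · subst hkl
      have := hm i j k
      rw [this]
      have hEk : ∀ i, E i k k = if i = k then 1 else 0 := by
        intro i; simp [E, Pi.single_apply, eq_comm]
      split_ifs with h <;> simp [hEk, htr] <;> grind
    · rw [hoff i j k l hkl]
      have hEk : ∀ i, E i k l = 0 := by
        intro i; simp [E, Matrix.diagonal_apply_ne _ hkl]
      split_ifs with h <;> simp [hEk, Matrix.one_apply_ne hkl]
  have hdd : ∀ d : Fin n → ℂ, Matrix.diagonal d = ∑ i, d i • E i := by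
    intro d
    rw [← Matrix.sum_single_eq_diagonal]
    refine Finset.sum_congr rfl fun i _ => ?_
    simp [E, Matrix.diagonal_single]
  have hz := bilin_zero (Φ - K)
    (fun x y => by
      simp only [LinearMap.sub_apply, hK]
      rw [hsym x y, Matrix.trace_mul_comm x y]
      module)
    (fun s hs x y => by
      have hmul : ∀ x y, s * x * s * (s * y * s) = s * (x * y) * s := by
        intro x y
        calc s * x * s * (s * y * s) = s * x * (s * s) * y * s := by noncomm_ring
          _ = s * (x * y) * s := by rw [hs]; noncomm_ring
      have htr : ∀ x, (s * x * s).trace = x.trace := by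
        intro x
        rw [Matrix.trace_mul_cycle, hs, one_mul]
      simp only [LinearMap.sub_apply, hK]
      rw [heq s hs, hmul, hmul, htr, htr, htr]
      simp only [mul_sub, sub_mul, mul_add, add_mul, mul_smul_comm, smul_mul_assoc, mul_one, hs])
    (fun d d' => by
      rw [hdd d, hdd d', map_sum]
      refine Finset.sum_eq_zero fun j _ => ?_
      rw [map_sum, LinearMap.sum_apply]
      refine Finset.sum_eq_zero fun i _ => ?_
      rw [map_smul, map_smul, LinearMap.smul_apply, hEK]
      simp)
  intro x y
  rw [← hK, ← sub_eq_zero]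
  exact hz x y

lemma finish {n : ℕ} (hn : 1 ≤ n)
    (T : Matrix (Fin n) (Fin n) ℂ →ₗ[ℂ] Matrix (Fin n) (Fin n) ℂ)
    (hone : T 1 = 1) (hinj : Function.Injective T) (γ : ℂ) (hγ : γ ≠ 0)
    (hJ : ∀ S : Matrix (Fin n) (Fin n) ℂ →ₗ[ℂ] Matrix (Fin n) (Fin n) ℂ,
      (∀ x, T x = γ • S x +
        ((1 - γ) * ((n : ℂ)⁻¹ * Matrix.trace x)) • (1 : Matrix (Fin n) (Fin n) ℂ)) →
      S 1 = 1 → Function.Injective S →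
      ∀ x y, S (x * y + y * x) = S x * S y + S y * S x) :
    ∃ S : Matrix (Fin n) (Fin n) ℂ →ₗ[ℂ] Matrix (Fin n) (Fin n) ℂ, ∃ γ : ℂ,
      γ ≠ 0 ∧ Function.Bijective S ∧
      (∀ x y, S (x * y + y * x) = S x * S y + S y * S x) ∧
      ∀ x, T x = γ • S x +
        ((1 - γ) * ((n : ℂ)⁻¹ * Matrix.trace x)) • (1 : Matrix (Fin n) (Fin n) ℂ) := by
  have hn0 : (n : ℂ) ≠ 0 := by exact_mod_cast (by omega : n ≠ 0)
  let S : Matrix (Fin n) (Fin n) ℂ →ₗ[ℂ] Matrix (Fin n) (Fin n) ℂ :=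
    γ⁻¹ • (T - ((1 - γ) * (n : ℂ)⁻¹) • (Matrix.traceLinearMap (Fin n) ℂ ℂ).smulRight 1)
  have hS : ∀ x, T x = γ • S x +
        ((1 - γ) * ((n : ℂ)⁻¹ * Matrix.trace x)) • (1 : Matrix (Fin n) (Fin n) ℂ) := by
    intro x
    simp only [S, LinearMap.smul_apply, LinearMap.sub_apply, LinearMap.smulRight_apply,
      Matrix.traceLinearMap_apply, smul_inv_smul₀ hγ]
    module
  have hS1 : S 1 = 1 := by
    have h := hS 1
    rw [hone, Matrix.trace_one, Fintype.card_fin, inv_mul_cancel₀ hn0, mul_one] at h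
    have : γ • S 1 = γ • (1 : Matrix (Fin n) (Fin n) ℂ) := by
      linear_combination (norm := module) -h
    exact smul_right_injective _ hγ this
  have hSi : Function.Injective S := by
    rw [injective_iff_map_eq_zero]
    intro x hx
    have h := hS x
    rw [hx, smul_zero, zero_add] at h
    set c := (1 - γ) * ((n : ℂ)⁻¹ * Matrix.trace x)
    have h2 : T x = T (c • 1) := by rw [map_smul, hone, h]
    have h3 := hinj h2
    rw [h3, map_smul, hS1] at hx
    rw [h3, hx]
  exact ⟨S, γ, hγ, ⟨hSi, LinearMap.injective_iff_surjective.mp hSi⟩, hJ S hS hS1 hSi, hS⟩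

lemma case_two
    (T : Matrix (Fin 2) (Fin 2) ℂ →ₗ[ℂ] Matrix (Fin 2) (Fin 2) ℂ)
    (hone : T 1 = 1) (hT : Function.Bijective T) (A β a b : ℂ)
    (h : ∀ x y, T x * T y + T y * T x = A • T (x * y + y * x) + a • (x.trace • T y + y.trace • T x)
      + (β * (x * y).trace + b * (x.trace * y.trace)) • (1 : Matrix (Fin 2) (Fin 2) ℂ)) :
    ∃ S : Matrix (Fin 2) (Fin 2) ℂ →ₗ[ℂ] Matrix (Fin 2) (Fin 2) ℂ, ∃ γ : ℂ,
      γ ≠ 0 ∧ Function.Bijective S ∧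
      (∀ x y, S (x * y + y * x) = S x * S y + S y * S x) ∧
      ∀ x, T x = γ • S x +
        ((1 - γ) * (((2 : ℕ) : ℂ)⁻¹ * Matrix.trace x)) • (1 : Matrix (Fin 2) (Fin 2) ℂ) := by
  have hCH : ∀ x y : Matrix (Fin 2) (Fin 2) ℂ, x * y + y * x = x.trace • y + y.trace • x
      + ((x * y).trace - x.trace * y.trace) • 1 := by
    intro x y
    ext i j
    fin_cases i <;> fin_cases j <;>
      simp [Matrix.mul_apply, Fin.sum_univ_two, Matrix.trace_fin_two] <;> ring
  obtain ⟨β', hβ'⟩ : ∃ β', β' = β + A := ⟨_, rfl⟩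
  obtain ⟨b', hb'⟩ : ∃ b', b' = b - A := ⟨_, rfl⟩
  have h2 : ∀ x y, T x * T y + T y * T x = (A + a) • (x.trace • T y + y.trace • T x)
      + (β' * (x * y).trace + b' * (x.trace * y.trace)) • (1 : Matrix (Fin 2) (Fin 2) ℂ) := by
    intro x y
    rw [h, hCH x y, hβ', hb']
    simp only [map_add, map_smul, hone]
    module
  -- determine the constants
  have hx : ∀ x, (2 : ℂ) • T x = (A + a) • (x.trace • (1 : Matrix (Fin 2) (Fin 2) ℂ) + (2 : ℂ) • T x)
      + (β' * x.trace + b' * (x.trace * 2)) • (1 : Matrix (Fin 2) (Fin 2) ℂ) := by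
    intro x
    have := h2 x 1
    simp only [hone, mul_one, one_mul, Matrix.trace_one, Fintype.card_fin, Nat.cast_ofNat] at this
    rw [← this]; module
  have hAa : A + a = 1 := by
    have h3 := hx (Matrix.single 0 1 1)
    have htr : (Matrix.single (0 : Fin 2) (1 : Fin 2) (1 : ℂ)).trace = 0 := by
      simp [Matrix.trace_fin_two, Matrix.single_apply]
    rw [htr] at h3
    have h4 : (2 * (1 - (A + a))) • T (Matrix.single 0 1 1) = 0 := by
      linear_combination (norm := module) h3
    rcases smul_eq_zero.mp h4 with h5 | h5
    · linear_combination -h5 / 2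
    · exfalso
      rw [← map_zero T] at h5
      have h6 := congrFun (congrFun (hT.1 h5) 0) 1
      simp at h6
  rw [hAa] at h2 hx
  have hb : 1 + β' + 2 * b' = 0 := by
    have h3 := hx 1
    rw [hone, Matrix.trace_one] at h3
    have h4 := congrFun (congrFun h3 0) 0
    simp at h4
    linear_combination -h4 / 2
  have hβ0 : β' ≠ 0 := by
    intro h0
    obtain ⟨x, hxx⟩ := hT.2 (Matrix.diagonal ![1, -1])
    have h3 := h2 x x
    rw [hxx, h0] at h3
    have h4 := congrFun (congrFun h3 0) 0
    have h5 := congrFun (congrFun h3 1) 1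
    simp at h4 h5
    grind
  obtain ⟨γ, hγ⟩ := IsAlgClosed.exists_pow_nat_eq β' (n := 2) (by norm_num)
  have hγ0 : γ ≠ 0 := by rintro rfl; apply hβ0; rw [← hγ]; norm_num
  refine finish (by norm_num) T hone hT.1 γ hγ0 ?_
  intro S hS hS1 _ x y
  have h3 := h2 x y
  rw [hS x, hS y] at h3
  have hb2 : b' = (-1 - γ ^ 2) / 2 := by rw [hγ]; linear_combination hb / 2
  simp only [mul_add, add_mul, smul_mul_assoc, mul_smul_comm, one_mul, mul_one, smul_add, smul_smul] at h3
  rw [hCH x y]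
  simp only [map_add, map_smul, hS1]
  rw [← hγ, hb2] at h3
  have h4 : (γ ^ 2) • (x.trace • S y + y.trace • S x + ((x * y).trace - x.trace * y.trace) • 1)
      = (γ ^ 2) • (S x * S y + S y * S x) := by
    push_cast at h3
    linear_combination (norm := module) -h3
  exact smul_right_injective _ (pow_ne_zero 2 hγ0) h4

lemma case_three {n : ℕ} (hn : 3 ≤ n)
    (T : Matrix (Fin n) (Fin n) ℂ →ₗ[ℂ] Matrix (Fin n) (Fin n) ℂ)
    (hone : T 1 = 1) (hT : Function.Bijective T) (A β a b : ℂ)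
    (h : ∀ x y, T x * T y + T y * T x = A • T (x * y + y * x) + a • (x.trace • T y + y.trace • T x)
      + (β * (x * y).trace + b * (x.trace * y.trace)) • (1 : Matrix (Fin n) (Fin n) ℂ)) :
    ∃ S : Matrix (Fin n) (Fin n) ℂ →ₗ[ℂ] Matrix (Fin n) (Fin n) ℂ, ∃ γ : ℂ,
      γ ≠ 0 ∧ Function.Bijective S ∧
      (∀ x y, S (x * y + y * x) = S x * S y + S y * S x) ∧
      ∀ x, T x = γ • S x +
        ((1 - γ) * ((n : ℂ)⁻¹ * Matrix.trace x)) • (1 : Matrix (Fin n) (Fin n) ℂ) := by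
  have hn0 : (n : ℂ) ≠ 0 := by exact_mod_cast (by omega : n ≠ 0)
  let i0 : Fin n := ⟨0, by omega⟩
  let i1 : Fin n := ⟨1, by omega⟩
  let i2 : Fin n := ⟨2, by omega⟩
  have h01 : i0 ≠ i1 := by simp [i0, i1]
  have h02 : i0 ≠ i2 := by simp [i0, i2]
  have h12 : i1 ≠ i2 := by simp [i1, i2]
  have hA0 : A ≠ 0 := by
    intro h0
    obtain ⟨x, hx⟩ := hT.2 (Matrix.diagonal (fun i => if i = i0 then 0 else if i = i1 then 1 else -1))
    have h3 := h x x
    rw [hx, h0, Matrix.diagonal_mul_diagonal] at h3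
    have e0 := congrFun (congrFun h3 i0) i0
    have e1 := congrFun (congrFun h3 i1) i1
    have e2 := congrFun (congrFun h3 i2) i2
    simp [h01.symm, h02.symm, h12.symm] at e0 e1 e2
    have : (4 : ℂ) = 0 := by linear_combination e1 + e2 - 2 * e0
    norm_num at this
  have hx : ∀ x, (2 : ℂ) • T x = (2 * A) • T x + a • (x.trace • (1 : Matrix (Fin n) (Fin n) ℂ) + (n : ℂ) • T x)
      + (β * x.trace + b * (x.trace * n)) • (1 : Matrix (Fin n) (Fin n) ℂ) := by
    intro x
    have := h x 1
    simp only [hone, mul_one, one_mul, Matrix.trace_one, Fintype.card_fin, map_add] at this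
    linear_combination (norm := module) this
  have hAa : 2 * A + a * n = 2 := by
    have h3 := hx (Matrix.single i0 i1 1)
    have htr : (Matrix.single i0 i1 (1 : ℂ)).trace = 0 := Matrix.trace_single_eq_of_ne _ _ _ h01
    rw [htr] at h3
    have h4 : (2 - (2 * A + a * n)) • T (Matrix.single i0 i1 1) = 0 := by
      linear_combination (norm := module) h3
    rcases smul_eq_zero.mp h4 with h5 | h5
    · linear_combination -h5
    · exfalso
      rw [← map_zero T] at h5
      have h6 := congrFun (congrFun (hT.1 h5) i0) i1
      simp at h6
  have ha : a = 2 * (1 - A) * (n : ℂ)⁻¹ := by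
    field_simp; linear_combination hAa
  refine finish (by omega) T hone hT.1 A hA0 ?_
  intro S hS hS1 hSi
  -- Jordan identity up to scalars
  obtain ⟨b', β', hJ⟩ : ∃ b' β' : ℂ, ∀ x y, S x * S y + S y * S x = S (x * y + y * x)
      + (β' * (x * y).trace + b' * (x.trace * y.trace)) • (1 : Matrix (Fin n) (Fin n) ℂ) := by
    refine ⟨(b + 2 * (1 - A) ^ 2 * (n : ℂ)⁻¹ ^ 2) / A ^ 2,
      (β + 2 * A * (1 - A) * (n : ℂ)⁻¹) / A ^ 2, fun x y => ?_⟩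
    have h3 := h x y
    rw [hS x, hS y, hS (x * y + y * x), ha] at h3
    simp only [mul_add, add_mul, smul_mul_assoc, mul_smul_comm, one_mul, mul_one, smul_add,
      smul_smul, map_add, Matrix.trace_add, Matrix.trace_mul_comm y x] at h3
    apply smul_right_injective _ (pow_ne_zero 2 hA0)
    simp only [smul_add, smul_smul, map_add]
    have e : A ^ 2 * ((β + 2 * A * (1 - A) * (n : ℂ)⁻¹) / A ^ 2 * (x * y).trace +
        (b + 2 * (1 - A) ^ 2 * (n : ℂ)⁻¹ ^ 2) / A ^ 2 * (x.trace * y.trace))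
        = (β + 2 * A * (1 - A) * (n : ℂ)⁻¹) * (x * y).trace +
        (b + 2 * (1 - A) ^ 2 * (n : ℂ)⁻¹ ^ 2) * (x.trace * y.trace) := by
      field_simp
    rw [e]
    linear_combination (norm := module) h3
  have hb1 : β' + b' * n = 0 := by
    have h3 := hJ 1 1
    simp only [hS1, mul_one, map_add, Matrix.trace_one, Fintype.card_fin] at h3
    have h4 := congrFun (congrFun h3 i0) i0
    simp at h4
    have h5 : n * (β' + b' * n) = 0 := by linear_combination h4
    exact (mul_eq_zero.mp h5).resolve_left hn0
  let q : Fin n → Matrix (Fin n) (Fin n) ℂ := fun i => S (Matrix.single i i 1)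
  have hqq : ∀ i, ∃ c : ℂ, q i * q i = q i + c • 1 := by
    intro i
    refine ⟨(β' + b') / 2, ?_⟩
    have h3 := hJ (Matrix.single i i 1) (Matrix.single i i 1)
    simp only [Matrix.single_mul_single_same, Matrix.trace_single_eq_same, map_add, mul_one] at h3
    simp only [q]
    linear_combination (norm := module) (1 / 2 : ℂ) • h3
  have hqa : ∀ i j, i ≠ j → q i * q j + q j * q i = b' • 1 := by
    intro i j hij
    have h3 := hJ (Matrix.single i i 1) (Matrix.single j j 1)
    simp only [Matrix.single_mul_single_of_ne _ _ _ _ hij, Matrix.single_mul_single_of_ne _ _ _ _ hij.symm,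
      Matrix.trace_single_eq_same, Matrix.trace_zero, map_zero, mul_one, mul_zero, zero_add, add_zero] at h3
    exact h3
  have hqc : ∀ i j, i ≠ j → q i * q j = q j * q i := by
    intro i j hij
    obtain ⟨c, hc⟩ := hqq i
    have e := hqa i j hij
    have e1 : q i * q i * q j - q j * (q i * q i) = 0 := by
      have : q i * q i * q j - q j * (q i * q i)
          = q i * (q i * q j + q j * q i) - (q i * q j + q j * q i) * q i := by noncomm_ring
      rw [this, e]; simp
    rw [hc] at e1
    simp only [add_mul, mul_add, smul_mul_assoc, mul_smul_comm, one_mul, mul_one] at e1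
    linear_combination (norm := module) e1
  have hqd : ∀ i j, i ≠ j → q i * q j = (b' / 2) • 1 := by
    intro i j hij
    have e1 := hqa i j hij
    rw [← hqc i j hij] at e1
    linear_combination (norm := module) (1 / 2 : ℂ) • e1
  have hb0 : b' = 0 := by
    have e : q i0 * q i1 * q i2 = q i0 * (q i1 * q i2) := mul_assoc _ _ _
    rw [hqd i0 i1 h01, hqd i1 i2 h12] at e
    simp only [smul_mul_assoc, mul_smul_comm, one_mul, mul_one] at e
    have e2 : (b' / 2) • (q i2 - q i0) = 0 := by rw [smul_sub, e, sub_self]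
    rcases smul_eq_zero.mp e2 with h5 | h5
    · linear_combination 2 * h5
    · exfalso
      have h6 := congrFun (congrFun (hSi (sub_eq_zero.mp h5)) i0) i0
      simp [Matrix.single_apply, h02.symm] at h6
  have hβ0 : β' = 0 := by rw [hb0] at hb1; linear_combination hb1
  intro x y
  rw [hJ, hb0, hβ0]
  simp

/-- Every unital surjective spectrally bounded linear map on `Mₙ(ℂ)` has the canonical form
`Tx = γ Sx + (1-γ) τ(x) 1` with `S` a Jordan automorphism, `γ ≠ 0` and `τ` the normalised
trace. -/
theorem spectrally_bounded_canonical_form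
    {n : ℕ} (hn : 1 ≤ n)
    (T : Matrix (Fin n) (Fin n) ℂ →ₗ[ℂ] Matrix (Fin n) (Fin n) ℂ)
    (hone : T 1 = 1) (hsurj : Function.Surjective T)
    (M : ℝ≥0) (hsb : ∀ x, spectralRadius ℂ (T x) ≤ (M : ℝ≥0∞) * spectralRadius ℂ x) :
    ∃ S : Matrix (Fin n) (Fin n) ℂ →ₗ[ℂ] Matrix (Fin n) (Fin n) ℂ, ∃ γ : ℂ,
      γ ≠ 0 ∧ Function.Bijective S ∧
      (∀ x y, S (x * y + y * x) = S x * S y + S y * S x) ∧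
      ∀ x, T x = γ • S x +
        ((1 - γ) * ((n : ℂ)⁻¹ * Matrix.trace x)) • (1 : Matrix (Fin n) (Fin n) ℂ) := by
  have hT : Function.Bijective T := ⟨LinearMap.injective_iff_surjective.mpr hsurj, hsurj⟩
  obtain ⟨Φ, hΦ, heq⟩ := exists_phi T hT (fun s hs x k => trace_inv T M hsb s hs x k)
  obtain ⟨A, β, a, b, hf⟩ := phi_form Φ
    (fun x y => hT.1 (by rw [hΦ, hΦ, add_comm])) heq
  have h : ∀ x y, T x * T y + T y * T x = A • T (x * y + y * x)
      + a • (x.trace • T y + y.trace • T x)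
      + (β * (x * y).trace + b * (x.trace * y.trace)) • (1 : Matrix (Fin n) (Fin n) ℂ) := by
    intro x y
    rw [← hΦ, hf]
    simp only [map_add, map_smul, hone]
  obtain rfl | rfl | h3 : n = 1 ∨ n = 2 ∨ 3 ≤ n := by omega
  · have hid : ∀ x : Matrix (Fin 1) (Fin 1) ℂ, x = x 0 0 • 1 := by
      intro x; ext i j; fin_cases i; fin_cases j; simp
    have hTx : ∀ x, T x = x := by
      intro x; rw [hid x, map_smul, hone]
    exact ⟨LinearMap.id, 1, one_ne_zero, Function.bijective_id, fun x y => rfl,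
      fun x => by simp [hTx]⟩
  · exact case_two T hone hT A β a b h
  · exact case_three h3 T hone hT A β a b h
end

section
/- For n ≥ 1, every unital spectral isometry T from Mₙ(ℂ) into itself (i.e., linear with T1 = 1 and r(Tx) = r(x) for all x) is a Jordan automorphism. -/
section Aux

attribute [local instance] Matrix.linftyOpNormedRing Matrix.linftyOpNormedAlgebra

open Matrix

/-- In nontrivial matrix algebras the spectral radius is attained. -/
lemma aux_attained {n : ℕ} (hn : 1 ≤ n) (x : Matrix (Fin n) (Fin n) ℂ) :
    ∃ k ∈ spectrum ℂ x, (‖k‖₊ : ENNReal) = spectralRadius ℂ x := by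
  have : NeZero n := ⟨by omega⟩
  have : Nontrivial (Matrix (Fin n) (Fin n) ℂ) := inferInstance
  have : CompleteSpace (Matrix (Fin n) (Fin n) ℂ) := FiniteDimensional.complete ℂ _
  exact spectrum.exists_nnnorm_eq_spectralRadius x

end Aux

open Matrix in
/-- Points of the spectrum on the unit circle survive when the spectrum lies in the unit disc. -/
lemma aux_periph {n : ℕ} (hn : 1 ≤ n)
    (T : Matrix (Fin n) (Fin n) ℂ →ₗ[ℂ] Matrix (Fin n) (Fin n) ℂ)
    (hone : T 1 = 1)
    (hiso : ∀ x, spectralRadius ℂ (T x) = spectralRadius ℂ x)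
    (x : Matrix (Fin n) (Fin n) ℂ) (hx : ∀ k ∈ spectrum ℂ x, ‖k‖ ≤ 1)
    (z : ℂ) (hz : z ∈ spectrum ℂ x) (hz1 : ‖z‖ = 1) : z ∈ spectrum ℂ (T x) := by
  have h1 : ∀ k ∈ spectrum ℂ (T x), ‖k‖ ≤ 1 := by
    intro k hk
    obtain ⟨l, hl, hl'⟩ := aux_attained hn x
    have h2 : (‖k‖₊ : ENNReal) ≤ spectralRadius ℂ (T x) :=
      le_iSup₂ (α := ENNReal) (f := fun k (_ : k ∈ spectrum ℂ (T x)) => (‖k‖₊ : ENNReal)) k hk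
    rw [hiso, ← hl', ENNReal.coe_le_coe] at h2
    exact le_trans (by exact_mod_cast h2) (hx l hl)
  obtain ⟨l, hl, hl'⟩ := aux_attained hn (T (algebraMap ℂ _ z + x))
  have h3 : (‖z + z‖₊ : ENNReal) ≤ spectralRadius ℂ (algebraMap ℂ _ z + x) :=
    le_iSup₂ (α := ENNReal)
      (f := fun k (_ : k ∈ spectrum ℂ (algebraMap ℂ _ z + x)) => (‖k‖₊ : ENNReal)) (z + z)
      (by rw [spectrum.add_mem_add_iff]; exact hz)
  rw [← hiso, ← hl', ENNReal.coe_le_coe] at h3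
  have h4 : T (algebraMap ℂ _ z + x) = algebraMap ℂ _ z + T x := by
    rw [map_add, Algebra.algebraMap_eq_smul_one, map_smul, hone]
  rw [h4] at hl
  obtain ⟨w, rfl⟩ : ∃ w, l = w + z := ⟨l - z, by ring⟩
  rw [spectrum.add_mem_add_iff] at hl
  have h5 : ‖z + z‖ ≤ ‖w + z‖ := by exact_mod_cast h3
  have h6 := h1 w hl
  have h7 : ‖z + z‖ = 2 := by rw [← two_mul, norm_mul, hz1]; norm_num
  have h8 := parallelogram_law_with_norm ℝ w z
  have h9 : ‖w - z‖ = 0 := by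
    have := norm_nonneg (w - z)
    have := norm_nonneg w
    nlinarith
  rw [norm_eq_zero, sub_eq_zero] at h9
  rwa [← h9]

/-- A matrix having `n` distinct eigenvalues has their sum as its trace. -/
lemma aux_trace {n : ℕ} (A : Matrix (Fin n) (Fin n) ℂ) (d : Fin n → ℂ)
    (hd : Function.Injective d) (h : ∀ i, d i ∈ spectrum ℂ A) : A.trace = ∑ i, d i := by
  have hle : Multiset.map d Finset.univ.val ≤ A.charpoly.roots := by
    rw [Multiset.le_iff_subset (Multiset.Nodup.map hd Finset.univ.nodup)]
    intro z hz
    simp only [Multiset.mem_map] at hz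
    obtain ⟨i, -, rfl⟩ := hz
    rw [Polynomial.mem_roots A.charpoly_monic.ne_zero]
    exact Matrix.mem_spectrum_iff_isRoot_charpoly.1 (h i)
  have heq := Multiset.eq_of_le_of_card_le hle (by
    refine (Polynomial.card_roots' _).trans ?_
    rw [Matrix.charpoly_natDegree_eq_dim]; simp)
  rw [Matrix.trace_eq_sum_roots_charpoly, ← heq]
  rfl

/-- Test points on the unit circle. -/
noncomputable def auxPt (q : ℕ) : ℂ := Complex.exp (((1 / ((q : ℝ) + 1) : ℝ) : ℂ) * Complex.I)

lemma auxPt_norm (q : ℕ) : ‖auxPt q‖ = 1 := Complex.norm_exp_ofReal_mul_I _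

lemma auxPt_inj (k : ℕ) (hk : 1 ≤ k) (hk3 : k ≤ 3) {p q : ℕ}
    (h : auxPt p ^ k = auxPt q ^ k) : p = q := by
  have hb : ∀ q : ℕ, 0 < (k : ℝ) * (1 / ((q : ℝ) + 1)) ∧ (k : ℝ) * (1 / ((q : ℝ) + 1)) ≤ 3 := by
    intro q
    have h1 : (1 : ℝ) ≤ k := by exact_mod_cast hk
    have h3 : (k : ℝ) ≤ 3 := by exact_mod_cast hk3
    have h4 : 1 / ((q : ℝ) + 1) ≤ 1 := by
      rw [div_le_one (by positivity)]; linarith [Nat.cast_nonneg (α := ℝ) q]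
    have h5 : 0 < 1 / ((q : ℝ) + 1) := by positivity
    constructor
    · positivity
    · nlinarith
  have him : ∀ q : ℕ, ((k : ℂ) * (((1 / ((q : ℝ) + 1) : ℝ) : ℂ) * Complex.I)).im
      = (k : ℝ) * (1 / ((q : ℝ) + 1)) := by
    intro q
    rw [← Complex.ofReal_natCast, ← mul_assoc, ← Complex.ofReal_mul]
    simp only [Complex.mul_I_im, Complex.ofReal_re]
  unfold auxPt at h
  rw [← Complex.exp_nat_mul, ← Complex.exp_nat_mul] at h
  have hpi := Real.pi_gt_three
  have h2 := Complex.exp_inj_of_neg_pi_lt_of_le_pi (by rw [him]; linarith [(hb p).1])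
    (by rw [him]; linarith [(hb p).2]) (by rw [him]; linarith [(hb q).1])
    (by rw [him]; linarith [(hb q).2]) h
  have h3 := congrArg Complex.im h2
  rw [him, him] at h3
  have hk0 : (k : ℝ) ≠ 0 := by positivity
  have h4 := mul_left_cancel₀ hk0 h3
  simp only [one_div, inv_inj, add_left_inj, Nat.cast_inj] at h4
  exact h4

lemma aux_diag {n : ℕ} (hn : 1 ≤ n)
    (T : Matrix (Fin n) (Fin n) ℂ →ₗ[ℂ] Matrix (Fin n) (Fin n) ℂ)
    (hone : T 1 = 1)
    (hiso : ∀ x, spectralRadius ℂ (T x) = spectralRadius ℂ x)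
    (k : ℕ) (hk : 1 ≤ k) (hk3 : k ≤ 3) (d : Fin n → ℂ) :
    ((T (Matrix.diagonal d)) ^ k).trace = ∑ i, d i ^ k := by
  classical
  let S : Fin n → Set ℂ := fun i => Set.range fun m : ℕ => auxPt (Encodable.encode (i, m))
  have hS : ∀ i, (S i).Infinite := by
    intro i
    apply Set.infinite_range_of_injective
    intro a b hab
    have := auxPt_inj 1 le_rfl (by norm_num) (p := Encodable.encode (i, a))
      (q := Encodable.encode (i, b)) (by simpa using hab)
    have := Encodable.encode_injective this
    simpa using this
  let E : Fin n → Matrix (Fin n) (Fin n) ℂ := fun i => T (Matrix.diagonal (Pi.single i 1))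
  let M : Matrix (Fin n) (Fin n) (MvPolynomial (Fin n) ℂ) :=
    ∑ i, (MvPolynomial.X i : MvPolynomial (Fin n) ℂ) • (E i).map MvPolynomial.C
  have hM : ∀ d : Fin n → ℂ, M.map (MvPolynomial.eval d) = T (Matrix.diagonal d) := by
    intro d
    have h1 : Matrix.diagonal d = ∑ i, d i • Matrix.diagonal (Pi.single i (1 : ℂ)) := by
      ext a b
      rw [Matrix.sum_apply]
      by_cases hab : a = b
      · subst hab; simp [Pi.single_apply]
      · simp [hab]
    rw [h1, map_sum]
    ext a b
    simp [M, E, Matrix.sum_apply]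
  have hev : ∀ d : Fin n → ℂ, MvPolynomial.eval d (M ^ k).trace =
      ((T (Matrix.diagonal d)) ^ k).trace := by
    intro d
    rw [← hM, ← RingHom.mapMatrix_apply, ← map_pow, RingHom.mapMatrix_apply]
    exact AddMonoidHom.map_trace (MvPolynomial.eval d) _
  have key : (M ^ k).trace = ∑ i, (MvPolynomial.X i : MvPolynomial (Fin n) ℂ) ^ k := by
    apply MvPolynomial.funext_set S hS
    intro z hz
    rw [hev]
    simp only [map_sum, map_pow, MvPolynomial.eval_X]
    have hzi : ∀ i, ∃ m : ℕ, auxPt (Encodable.encode (i, m)) = z i := fun i => hz i trivial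
    choose m hm using hzi
    apply aux_trace _ (fun i => z i ^ k)
    · intro i j hij
      simp only [← hm] at hij
      have := Encodable.encode_injective (auxPt_inj k hk hk3 hij)
      exact (Prod.mk.inj this).1
    · intro i
      apply spectrum.pow_mem_pow
      apply aux_periph hn T hone hiso
      · intro w hw
        rw [spectrum_diagonal] at hw
        obtain ⟨j, rfl⟩ := hw
        rw [← hm, auxPt_norm]
      · rw [spectrum_diagonal]; exact ⟨i, rfl⟩
      · rw [← hm, auxPt_norm]
  rw [← hev, key]
  simp

lemma aux_herm {n : ℕ} (hn : 1 ≤ n)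
    (T : Matrix (Fin n) (Fin n) ℂ →ₗ[ℂ] Matrix (Fin n) (Fin n) ℂ)
    (hone : T 1 = 1)
    (hiso : ∀ x, spectralRadius ℂ (T x) = spectralRadius ℂ x)
    (k : ℕ) (hk : 1 ≤ k) (hk3 : k ≤ 3) (x : Matrix (Fin n) (Fin n) ℂ) (hx : x.IsHermitian) :
    ((T x) ^ k).trace = (x ^ k).trace := by
  let φ := Unitary.conjStarAlgAut ℂ _ hx.eigenvectorUnitary
  let T' : Matrix (Fin n) (Fin n) ℂ →ₗ[ℂ] Matrix (Fin n) (Fin n) ℂ :=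
    T ∘ₗ φ.toAlgEquiv.toLinearMap
  have e : x = φ (Matrix.diagonal (RCLike.ofReal ∘ hx.eigenvalues)) := hx.spectral_theorem
  have hT' : ∀ y, T' y = T (φ y) := fun y => rfl
  have h1 := aux_diag hn T' (by rw [hT', map_one, hone]) (by
    intro y
    rw [hT', hiso]
    unfold spectralRadius
    rw [AlgEquiv.spectrum_eq φ y]) k hk hk3 (RCLike.ofReal ∘ hx.eigenvalues)
  rw [hT', ← e] at h1
  rw [h1]
  conv_rhs => rw [e, ← map_pow, Matrix.diagonal_pow]
  simp only [φ, Unitary.conjStarAlgAut_apply]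
  rw [Matrix.trace_mul_cycle]
  simp [Matrix.trace]

/-- Hermitian decomposition. -/
lemma aux_decomp {n : ℕ} (x : Matrix (Fin n) (Fin n) ℂ) :
    ∃ a b : Matrix (Fin n) (Fin n) ℂ, a.IsHermitian ∧ b.IsHermitian ∧ x = a + Complex.I • b := by
  refine ⟨(realPart x : _), (imaginaryPart x : _), (realPart x).2, (imaginaryPart x).2, ?_⟩
  exact (realPart_add_I_smul_imaginaryPart x).symm

/-- Every unital spectral isometry of `Mₙ(ℂ)` into itself is a Jordan automorphism. -/
theorem spectral_isometry_matrix_is_jordan_automorphism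
    {n : ℕ} (hn : 1 ≤ n)
    (T : Matrix (Fin n) (Fin n) ℂ →ₗ[ℂ] Matrix (Fin n) (Fin n) ℂ)
    (hone : T 1 = 1)
    (hiso : ∀ x, spectralRadius ℂ (T x) = spectralRadius ℂ x) :
    Function.Bijective T ∧ ∀ x, T (x * x) = T x * T x := by
  have H := aux_herm hn T hone hiso
  have q1 : ∀ a b : Matrix (Fin n) (Fin n) ℂ, a.IsHermitian → b.IsHermitian →
      (T a * T b).trace = (a * b).trace := by
    intro a b ha hb
    have h1 := H 2 (by norm_num) (by norm_num) (a + b) (ha.add hb)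
    have h2 := H 2 (by norm_num) (by norm_num) a ha
    have h3 := H 2 (by norm_num) (by norm_num) b hb
    simp only [map_add, pow_two, mul_add, add_mul, Matrix.trace_add] at h1 h2 h3
    rw [Matrix.trace_mul_comm (T b) (T a), Matrix.trace_mul_comm b a] at h1
    linear_combination (1/2) * (h1 - h2 - h3)
  have q2 : ∀ a y : Matrix (Fin n) (Fin n) ℂ, a.IsHermitian →
      (T a * T y).trace = (a * y).trace := by
    intro a y ha
    obtain ⟨b, c, hb, hc, rfl⟩ := aux_decomp y
    simp only [map_add, map_smul, mul_add, Matrix.mul_smul, Matrix.trace_add, Matrix.trace_smul,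
      q1 a b ha hb, q1 a c ha hc]
  have q3 : ∀ x y : Matrix (Fin n) (Fin n) ℂ, (T x * T y).trace = (x * y).trace := by
    intro x y
    obtain ⟨b, c, hb, hc, rfl⟩ := aux_decomp x
    simp only [map_add, map_smul, add_mul, Matrix.smul_mul, Matrix.trace_add, Matrix.trace_smul,
      q2 b y hb, q2 c y hc]
  have hinj : Function.Injective T := by
    rw [injective_iff_map_eq_zero]
    intro x hx
    rw [Matrix.ext_iff_trace_mul_right]
    intro y
    rw [← q3, hx]
    simp
  have hsurj : Function.Surjective T := LinearMap.injective_iff_surjective.1 hinj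
  refine ⟨⟨hinj, hsurj⟩, ?_⟩
  have c1 : ∀ a b : Matrix (Fin n) (Fin n) ℂ, a.IsHermitian → b.IsHermitian →
      (T a * T a * T b).trace = (a * a * b).trace := by
    intro a b ha hb
    have h1 := H 3 (by norm_num) (by norm_num) (a + b) (ha.add hb)
    have h2 := H 3 (by norm_num) (by norm_num) (a - b) (ha.sub hb)
    have h3 := H 3 (by norm_num) (by norm_num) b hb
    have cub : ∀ u v : Matrix (Fin n) (Fin n) ℂ,
        ((u + v) ^ 3).trace - ((u - v) ^ 3).trace = 6 * (u * u * v).trace + 2 * (v ^ 3).trace := by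
      intro u v
      have e : (u + v) ^ 3 - (u - v) ^ 3 =
          2 • (u * u * v + u * v * u + v * u * u + v ^ 3) := by noncomm_ring
      rw [← Matrix.trace_sub, e, Matrix.trace_smul, Matrix.trace_add, Matrix.trace_add,
        Matrix.trace_add, Matrix.trace_mul_cycle v u u, Matrix.trace_mul_cycle u v u]
      simp only [nsmul_eq_mul]
      push_cast
      ring
    have h4 := cub (T a) (T b)
    have h5 := cub a b
    rw [map_add] at h1
    rw [map_sub] at h2
    linear_combination (1/6) * (h5 - h4 + h1 - h2 - 2 * h3)
  have c2 : ∀ a : Matrix (Fin n) (Fin n) ℂ, a.IsHermitian → T (a * a) = T a * T a := by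
    intro a ha
    rw [Matrix.ext_iff_trace_mul_right]
    intro y
    obtain ⟨y, rfl⟩ := hsurj y
    rw [q3]
    obtain ⟨b, c, hb, hc, rfl⟩ := aux_decomp y
    simp only [map_add, map_smul, mul_add, Matrix.mul_smul, Matrix.trace_add, Matrix.trace_smul,
      c1 a b ha hb, c1 a c ha hc]
  intro x
  obtain ⟨a, b, ha, hb, rfl⟩ := aux_decomp x
  have h1 := c2 a ha
  have h2 := c2 b hb
  have h3 := c2 (a + b) (ha.add hb)
  have h4 : T (a * b) + T (b * a) = T a * T b + T b * T a := by
    simp only [map_add, mul_add, add_mul, h1, h2] at h3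
    have h5 := sub_eq_zero.2 h3
    rw [← sub_eq_zero, ← h5]
    abel
  have e : ∀ u v : Matrix (Fin n) (Fin n) ℂ, (u + Complex.I • v) * (u + Complex.I • v) =
      u * u + Complex.I • (u * v + v * u) + (Complex.I * Complex.I) • (v * v) := by
    intro u v
    simp only [mul_add, add_mul, Matrix.mul_smul, Matrix.smul_mul, smul_add, mul_smul]
    abel
  rw [map_add, map_smul, e, e, ← h4, ← h1, ← h2]
  simp only [map_add, map_smul]
end
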